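/- arXiv:1911.10577 — 7 statements merged into one kernel-verified Lean document; each statement's English description precedes it below -/
import Mathlib

section
/- Let R ⊆ S be an FCP ring extension. Then R ⊆ S is catenarian if and only if every subextension T ⊆ U (with T, U ∈ [R,S], T ⊆ U) is catenarian. -/
/-!
FCP forbids infinite strictly monotone and strictly antitone sequences of subalgebras, so the
lattice `[R,S]` is well founded in both directions, and therefore any `T ≤ U` are joined by a
finite maximal chain (`exists_isMaxChainFromTo`). Given two maximal chains from `T` to `U`, of
lengths `n` and `m`, extend both by the same maximal chain from `⊥` to `T`, of length `a`, and the
same maximal chain from `U` to `⊤`, of length `b` (`IsMaxChainFromTo.exists_append`). If `R ⊆ S` is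
catenarian then `a + n + b = a + m + b`, hence `n = m`. The converse is the case `T = ⊥`, `U = ⊤`.
-/

/-- A maximal chain of length `n` from `T` to `U`: each step is a covering. -/
def IsMaxChainFromTo {α : Type*} [PartialOrder α] (T U : α) (n : ℕ)
    (c : Fin (n + 1) → α) : Prop :=
  c 0 = T ∧ c (Fin.last n) = U ∧ ∀ i : Fin n, c i.castSucc ⋖ c i.succ

/-- The subextension determined by `T ≤ U` is catenarian: all maximal chains from
`T` to `U` have the same length. -/
def IsCatenarianFromTo {α : Type*} [PartialOrder α] (T U : α) : Prop :=
  ∀ (n m : ℕ) (c : Fin (n + 1) → α) (d : Fin (m + 1) → α),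
    IsMaxChainFromTo T U n c → IsMaxChainFromTo T U m d → n = m

/-- The extension `R ⊆ S` has FCP: every chain of `R`-subalgebras of `S` is finite. -/
def IsFCPExt (R S : Type*) [CommRing R] [CommRing S] [Algebra R S] : Prop :=
  ∀ C : Set (Subalgebra R S), IsChain (· ≤ ·) C → C.Finite

/-- The extension `R ⊆ S` is catenarian. -/
def IsCatenarianExt (R S : Type*) [CommRing R] [CommRing S] [Algebra R S] : Prop :=
  IsCatenarianFromTo (⊥ : Subalgebra R S) ⊤

/-- The length `ℓ[T,U]`: the supremum of lengths of chains from `T` to `U`. -/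
noncomputable def extLength {α : Type*} [PartialOrder α] (T U : α) : ℕ :=
  sSup {n | ∃ c : Fin (n + 1) → α, StrictMono c ∧ c 0 = T ∧ c (Fin.last n) = U}

section Order

variable {α : Type*} [PartialOrder α]

lemma IsMaxChainFromTo.snoc {T W U : α} {n : ℕ} {c : Fin (n + 1) → α}
    (hc : IsMaxChainFromTo T W n c) (h : W ⋖ U) :
    IsMaxChainFromTo T U (n + 1) (Fin.snoc (α := fun _ => α) c U) := by
  obtain ⟨h0, hl, hs⟩ := hc
  refine ⟨?_, by simp, fun i => ?_⟩
  · rw [← Fin.castSucc_zero, Fin.snoc_castSucc, h0]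
  · induction i using Fin.lastCases with
    | last => rw [Fin.snoc_castSucc, Fin.succ_last, Fin.snoc_last, hl]; exact h
    | cast i =>
      rw [Fin.snoc_castSucc, Fin.succ_castSucc, Fin.snoc_castSucc]
      exact hs i

lemma IsMaxChainFromTo.exists_append {T U V : α} {n m : ℕ} {c : Fin (n + 1) → α}
    {d : Fin (m + 1) → α} (hc : IsMaxChainFromTo T U n c) (hd : IsMaxChainFromTo U V m d) :
    ∃ e, IsMaxChainFromTo T V (n + m) e := by
  induction m generalizing V with
  | zero =>
    obtain ⟨h0, hl, -⟩ := hd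
    obtain rfl : U = V := h0.symm.trans hl
    exact ⟨c, hc⟩
  | succ m ih =>
    obtain ⟨h0, hl, hs⟩ := hd
    obtain ⟨e, he⟩ := ih (V := d (Fin.last m).castSucc) (d := fun i => d i.castSucc)
      ⟨h0, rfl, fun i => hs i.castSucc⟩
    exact ⟨_, he.snoc (hl ▸ hs (Fin.last m))⟩

lemma exists_isMaxChainFromTo [WellFoundedLT α] [WellFoundedGT α] (T U : α) (h : T ≤ U) :
    ∃ n c, IsMaxChainFromTo T U n c := by
  induction U using WellFoundedLT.induction with
  | ind U ih =>
    rcases h.eq_or_lt with rfl | hlt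
    · exact ⟨0, fun _ => T, rfl, rfl, fun i => i.elim0⟩
    · obtain ⟨W, hTW, hWU⟩ := exists_le_covBy_of_lt hlt
      obtain ⟨n, c, hc⟩ := ih W hWU.lt hTW
      exact ⟨_, _, hc.snoc hWU⟩

end Order

section FCP

variable {R S : Type*} [CommRing R] [CommRing S] [Algebra R S]

lemma IsFCPExt.wellFoundedLT (h : IsFCPExt R S) : WellFoundedLT (Subalgebra R S) := by
  refine ⟨RelEmbedding.wellFounded_iff_isEmpty.2 ⟨fun f => ?_⟩⟩
  have hf : StrictAnti f := fun a b hab => f.map_rel_iff.2 hab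
  exact Set.infinite_range_of_injective f.injective (h _ hf.antitone.isChain_range)

lemma IsFCPExt.wellFoundedGT (h : IsFCPExt R S) : WellFoundedGT (Subalgebra R S) := by
  refine ⟨RelEmbedding.wellFounded_iff_isEmpty.2 ⟨fun f => ?_⟩⟩
  have hf : StrictMono f := fun a b hab => f.map_rel_iff.2 hab
  exact Set.infinite_range_of_injective f.injective (h _ hf.monotone.isChain_range)

end FCP

/-- An FCP ring extension `R ⊆ S` is catenarian iff every subextension
`T ⊆ U` (with `T, U ∈ [R,S]`) is catenarian. -/
theorem stmt_0 {R S : Type*} [CommRing R] [CommRing S] [Algebra R S]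
    (hinj : Function.Injective (algebraMap R S)) (hFCP : IsFCPExt R S) :
    IsCatenarianExt R S ↔
      ∀ T U : Subalgebra R S, T ≤ U → IsCatenarianFromTo T U := by
  refine ⟨fun h T U _ n m c d hc hd => ?_, fun h => h ⊥ ⊤ bot_le⟩
  have := hFCP.wellFoundedLT
  have := hFCP.wellFoundedGT
  obtain ⟨a, p, hp⟩ := exists_isMaxChainFromTo ⊥ T bot_le
  obtain ⟨b, q, hq⟩ := exists_isMaxChainFromTo U ⊤ le_top
  obtain ⟨c₁, hc₁⟩ := hp.exists_append hc
  obtain ⟨c₂, hc₂⟩ := hc₁.exists_append hq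
  obtain ⟨d₁, hd₁⟩ := hp.exists_append hd
  obtain ⟨d₂, hd₂⟩ := hd₁.exists_append hq
  have := h _ _ _ _ hc₂ hd₂
  omega
end

section
/- Let R ⊆ S be an FCP ring extension. The following statements are equivalent: (1) R ⊆ S is catenarian; (2) for each ideal I of S which is contained in R (an ideal shared by R and S), the extension R/I ⊆ S/I is catenarian; (3) there exists an ideal I of S contained in R such that R/I ⊆ S/I is catenarian. -/
theorem IsMaxChainFromTo.map {α β : Type*} [PartialOrder α] [PartialOrder β] (e : α ≃o β)
    {T U : α} {n : ℕ} {c : Fin (n + 1) → α} (h : IsMaxChainFromTo T U n c) :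
    IsMaxChainFromTo (e T) (e U) n (e ∘ c) :=
  ⟨congrArg e h.1, congrArg e h.2.1, fun i => (apply_covBy_apply_iff e).2 (h.2.2 i)⟩

theorem IsCatenarianFromTo.of_orderIso {α β : Type*} [PartialOrder α] [PartialOrder β]
    (e : α ≃o β) {T U : α} (h : IsCatenarianFromTo (e T) (e U)) : IsCatenarianFromTo T U :=
  fun n m _ _ hc hd => h n m _ _ (hc.map e) (hd.map e)

theorem isCatenarianExt_iff_of_orderIso {R S R' S' : Type*} [CommRing R] [CommRing S] [Algebra R S]
    [CommRing R'] [CommRing S'] [Algebra R' S'] (e : Subalgebra R S ≃o Subalgebra R' S') :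
    IsCatenarianExt R S ↔ IsCatenarianExt R' S' := by
  constructor
  · intro h
    refine IsCatenarianFromTo.of_orderIso e.symm ?_
    rwa [e.symm.map_bot, e.symm.map_top]
  · intro h
    refine IsCatenarianFromTo.of_orderIso e ?_
    rwa [e.map_bot, e.map_top]

/-- The correspondence theorem for subalgebras along a commutative square of rings with surjective
horizontal maps `f : R → R'` and `g : S → S'`, when the kernel of `g` lies in the image of `R`:
subalgebras are matched by image and preimage under `g`. -/
def subalgebraQuotientIso {R S R' S' : Type*} [CommRing R] [CommRing S] [Algebra R S]
    [CommRing R'] [CommRing S'] [Algebra R' S'] (f : R →+* R') (g : S →+* S')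
    (hf : Function.Surjective f) (hg : Function.Surjective g)
    (hfg : ∀ r, algebraMap R' S' (f r) = g (algebraMap R S r))
    (hker : ∀ s, g s = 0 → s ∈ Set.range (algebraMap R S)) :
    Subalgebra R S ≃o Subalgebra R' S' where
  toFun A :=
    { A.toSubring.map g with
      algebraMap_mem' := fun r' => by
        obtain ⟨r, rfl⟩ := hf r'
        exact ⟨algebraMap R S r, A.algebraMap_mem r, (hfg r).symm⟩ }
  invFun B :=
    { B.toSubring.comap g with
      algebraMap_mem' := fun r => by
        change g (algebraMap R S r) ∈ B
        rw [← hfg]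
        exact B.algebraMap_mem _ }
  left_inv A := by
    ext s
    change (∃ a ∈ A, g a = g s) ↔ s ∈ A
    refine ⟨?_, fun hs => ⟨s, hs, rfl⟩⟩
    rintro ⟨a, ha, has⟩
    -- `s - a` lies in the kernel of `g`, hence in the image of `R`, hence in `A`.
    obtain ⟨r, hr⟩ := hker (s - a) (by rw [map_sub, has, sub_self])
    have hsum := A.add_mem (A.algebraMap_mem r) ha
    rwa [hr, sub_add_cancel] at hsum
  right_inv B := by
    ext s'
    change (∃ a, g a ∈ B ∧ g a = s') ↔ s' ∈ B
    constructor
    · rintro ⟨a, ha, rfl⟩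
      exact ha
    · intro hs'
      obtain ⟨s, rfl⟩ := hg s'
      exact ⟨s, hs', rfl⟩
  map_rel_iff' := by
    intro A B
    change (∀ s', (∃ a ∈ A, g a = s') → ∃ b ∈ B, g b = s') ↔ A ≤ B
    constructor
    · intro h s hs
      obtain ⟨b, hb, hbs⟩ := h (g s) ⟨s, hs, rfl⟩
      obtain ⟨r, hr⟩ := hker (s - b) (by rw [map_sub, hbs, sub_self])
      have hsum := B.add_mem (B.algebraMap_mem r) hb
      rwa [hr, sub_add_cancel] at hsum
    · rintro h s' ⟨a, ha, rfl⟩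
      exact ⟨a, h ha, rfl⟩

theorem isCatenarianExt_quotient_iff {R S : Type*} [CommRing R] [CommRing S] [Algebra R S]
    (I : Ideal S) (hI : (I : Set S) ⊆ Set.range (algebraMap R S)) :
    letI : Algebra (R ⧸ I.comap (algebraMap R S)) (S ⧸ I) :=
      (Ideal.quotientMap I (algebraMap R S) le_rfl).toAlgebra
    IsCatenarianExt R S ↔ IsCatenarianExt (R ⧸ I.comap (algebraMap R S)) (S ⧸ I) := by
  let : Algebra (R ⧸ I.comap (algebraMap R S)) (S ⧸ I) :=
    (Ideal.quotientMap I (algebraMap R S) le_rfl).toAlgebra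
  exact isCatenarianExt_iff_of_orderIso
    (subalgebraQuotientIso (Ideal.Quotient.mk (I.comap (algebraMap R S))) (Ideal.Quotient.mk I)
      Ideal.Quotient.mk_surjective Ideal.Quotient.mk_surjective (fun _ => rfl)
      (fun _ hs => hI (Ideal.Quotient.eq_zero_iff_mem.1 hs)))

/-- For an FCP extension `R ⊆ S`, the following are equivalent:
(1) `R ⊆ S` is catenarian; (2) `R/I ⊆ S/I` is catenarian for every ideal `I` of `S`
shared by `R` and `S`; (3) `R/I ⊆ S/I` is catenarian for some such ideal. -/
theorem stmt_2 {R S : Type*} [CommRing R] [CommRing S] [Algebra R S]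
    (hinj : Function.Injective (algebraMap R S)) (hFCP : IsFCPExt R S) :
    List.TFAE
      [ IsCatenarianExt R S,
        ∀ I : Ideal S, (I : Set S) ⊆ Set.range (algebraMap R S) →
          letI : Algebra (R ⧸ I.comap (algebraMap R S)) (S ⧸ I) :=
            (Ideal.quotientMap I (algebraMap R S) le_rfl).toAlgebra
          IsCatenarianExt (R ⧸ I.comap (algebraMap R S)) (S ⧸ I),
        ∃ I : Ideal S, (I : Set S) ⊆ Set.range (algebraMap R S) ∧
          letI : Algebra (R ⧸ I.comap (algebraMap R S)) (S ⧸ I) :=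
            (Ideal.quotientMap I (algebraMap R S) le_rfl).toAlgebra
          IsCatenarianExt (R ⧸ I.comap (algebraMap R S)) (S ⧸ I) ] := by
  tfae_have 1 → 2 := fun h I hI => (isCatenarianExt_quotient_iff I hI).1 h
  tfae_have 2 → 3 := fun h => by
    have h0 : ((⊥ : Ideal S) : Set S) ⊆ Set.range (algebraMap R S) := by
      rintro s hs
      exact ⟨0, by rw [map_zero, (Ideal.mem_bot.1 hs)]⟩
    exact ⟨⊥, h0, h ⊥ h0⟩
  tfae_have 3 → 1 := fun ⟨I, hI, h⟩ => (isCatenarianExt_quotient_iff I hI).2 h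
  tfae_finish
end

section
/- Let R ⊆ S be an FCP ring extension which is Prüfer, i.e., for every T ∈ [R,S] the inclusion R → T is a flat epimorphism (T is flat as an R-module and R → T is an epimorphism in the category of commutative rings). Then R ⊆ S is catenarian. -/
open TensorProduct

/-- The denominator ideal of `y` with respect to the submodule `N`: all `r` with `r • y ∈ N`. -/
def denomIdeal {R M : Type*} [CommRing R] [AddCommGroup M] [Module R M]
    (N : Submodule R M) (y : M) : Ideal R :=
  N.comap (LinearMap.toSpanSingleton R M y)

lemma mem_denomIdeal {R M : Type*} [CommRing R] [AddCommGroup M] [Module R M]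
    {N : Submodule R M} {y : M} {r : R} : r ∈ denomIdeal N y ↔ r • y ∈ N := by
  simp [denomIdeal]

/-- Over a flat epimorphism, the denominator ideal of every element extends to the unit ideal. -/
lemma map_denomIdeal_bot_eq_top {R A : Type*} [CommRing R] [CommRing A] [Algebra R A]
    [Module.Flat R A] (hA : Algebra.IsEpi R A) (a : A) :
    (denomIdeal (Subalgebra.toSubmodule (⊥ : Subalgebra R A)) a).map (algebraMap R A) = ⊤ := by
  set N := Subalgebra.toSubmodule (⊥ : Subalgebra R A) with hN
  set I := denomIdeal N a with hI
  let f : R →ₗ[R] A ⧸ N := N.mkQ ∘ₗ LinearMap.toSpanSingleton R A a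
  have hker : I = LinearMap.ker f := by
    ext r
    simp [f, hI, mem_denomIdeal, Submodule.Quotient.mk_eq_zero, ← Submodule.Quotient.mk_smul]
  let g : (R ⧸ I) →ₗ[R] A ⧸ N := I.liftQ f hker.le
  have hg : Function.Injective g :=
    LinearMap.ker_eq_bot.mp (Submodule.ker_liftQ_eq_bot _ _ _ hker.ge)
  have hinj := Module.Flat.lTensor_preserves_injective_linearMap (M := A) g hg
  have hzero : ∀ x : A ⊗[R] (A ⧸ N), x = 0 := by
    intro x
    induction x using TensorProduct.induction_on with
    | zero => rfl
    | add x y hx hy => rw [hx, hy, add_zero]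
    | tmul t q =>
      obtain ⟨s, rfl⟩ := N.mkQ_surjective q
      have h : t ⊗ₜ[R] s = (t * s) ⊗ₜ[R] (1 : A) := hA.injective_lift_mul (by simp)
      have h1 : N.mkQ (1 : A) = 0 := by
        simp [hN]
      have := congrArg (N.mkQ.lTensor A) h
      simpa only [LinearMap.lTensor_tmul, h1, TensorProduct.tmul_zero] using this
  have hsub : Subsingleton (A ⊗[R] (R ⧸ I)) :=
    ⟨fun x y ↦ hinj ((hzero _).trans (hzero _).symm)⟩
  have hq := (TensorProduct.tensorQuotEquivQuotSMul A I).symm.toEquiv.subsingleton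
  have htop := Submodule.Quotient.subsingleton_iff.mp hq
  rw [Ideal.smul_top_eq_map] at htop
  exact (Submodule.restrictScalars_eq_top_iff _ _ _).mp htop

lemma map_denomIdeal_eq_top_of_mem_sup {R S : Type*} [CommRing R] [CommRing S] [Algebra R S]
    (T U : Subalgebra R S) [Module.Flat R T] (hT : Algebra.IsEpi R T) {y : S} (hy : y ∈ T ⊔ U) :
    (denomIdeal (Subalgebra.toSubmodule U) y).map (algebraMap R T) = ⊤ := by
  -- The ideals with unit extension are closed under products, which handles sums and products.
  have key : ∀ {I J K : Ideal R}, I * J ≤ K → I.map (algebraMap R T) = ⊤ →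
      J.map (algebraMap R T) = ⊤ → K.map (algebraMap R T) = ⊤ := by
    intro I J K h hI hJ
    refine top_le_iff.mp ?_
    calc ⊤ = (I * J).map (algebraMap R T) := by rw [Ideal.map_mul, hI, hJ, Ideal.top_mul]
      _ ≤ _ := Ideal.map_mono h
  rw [Algebra.sup_def] at hy
  induction hy using Algebra.adjoin_induction with
  | mem x hx =>
    rcases hx with hx | hx
    · rw [← top_le_iff, ← map_denomIdeal_bot_eq_top hT ⟨x, hx⟩]
      refine Ideal.map_mono fun r hr ↦ ?_
      rw [mem_denomIdeal, Subalgebra.mem_toSubmodule, Algebra.mem_bot] at hr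
      obtain ⟨s, hs⟩ := hr
      rw [mem_denomIdeal, Subalgebra.mem_toSubmodule]
      have : algebraMap R S s = r • x := congrArg Subtype.val hs
      exact this ▸ U.algebraMap_mem s
    · have : denomIdeal (Subalgebra.toSubmodule U) x = ⊤ :=
        eq_top_iff.mpr fun r _ ↦ mem_denomIdeal.mpr (U.smul_mem hx r)
      rw [this, Ideal.map_top]
  | algebraMap r =>
    have : denomIdeal (Subalgebra.toSubmodule U) (algebraMap R S r) = ⊤ :=
      eq_top_iff.mpr fun s _ ↦ mem_denomIdeal.mpr (U.smul_mem (U.algebraMap_mem r) s)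
    rw [this, Ideal.map_top]
  | add x y _ _ hx hy =>
    refine key (Ideal.mul_le.mpr fun r hr s hs ↦ ?_) hx hy
    rw [mem_denomIdeal, Subalgebra.mem_toSubmodule] at *
    have h : (r * s) • (x + y) = s • (r • x) + r • (s • y) := by
      rw [smul_add, mul_smul, mul_smul, smul_comm r s x]
    exact h ▸ U.add_mem (U.smul_mem hr s) (U.smul_mem hs r)
  | mul x y _ _ hx hy =>
    refine key (Ideal.mul_le.mpr fun r hr s hs ↦ ?_) hx hy
    rw [mem_denomIdeal, Subalgebra.mem_toSubmodule] at *
    exact smul_mul_smul_comm r x s y ▸ U.mul_mem hr hs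

lemma isModularLattice_subalgebra {R S : Type*} [CommRing R] [CommRing S] [Algebra R S]
    (hflat : ∀ T : Subalgebra R S, Module.Flat R T)
    (hepi : ∀ T : Subalgebra R S, Algebra.IsEpi R T) :
    IsModularLattice (Subalgebra R S) where
  sup_inf_le_assoc_of_le {T} U {V} hTV := by
    intro y hy
    obtain ⟨hyTU, hyV⟩ := Algebra.mem_inf.mp hy
    have := hflat T
    have htop := map_denomIdeal_eq_top_of_mem_sup T U (hepi T) hyTU
    -- The elements of `T` multiplying `y` into `T ⊔ (U ⊓ V)` form an ideal `K` of `T`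
    -- containing the denominator ideal of `y`, so `K` contains `1`.
    let W := T ⊔ U ⊓ V
    let K : Ideal T :=
      { carrier := {t | (t : S) * y ∈ W}
        add_mem' := fun {a b} ha hb ↦ by
          simpa [add_mul] using W.add_mem ha hb
        zero_mem' := by simp
        smul_mem' := fun c x hx ↦ by
          simpa [mul_assoc] using W.mul_mem (Algebra.mem_sup_left c.2) hx }
    have hK : (denomIdeal (Subalgebra.toSubmodule U) y).map (algebraMap R T) ≤ K := by
      refine Ideal.map_le_iff_le_comap.mpr fun r hr ↦ ?_
      rw [mem_denomIdeal, Subalgebra.mem_toSubmodule] at hr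
      change algebraMap R S r * y ∈ W
      rw [← Algebra.smul_def]
      exact Algebra.mem_sup_right (Algebra.mem_inf.mpr ⟨hr, V.smul_mem hyV r⟩)
    have h1 : (1 : T) ∈ K := hK (htop ▸ Submodule.mem_top)
    have h2 : ((1 : T) : S) * y ∈ W := h1
    simpa using h2

/-- A Prüfer FCP extension (every `T ∈ [R,S]` is flat over `R` and
`R → T` is an epimorphism of commutative rings) is catenarian. -/
theorem stmt_5 {R S : Type u} [CommRing R] [CommRing S] [Algebra R S]
    (hinj : Function.Injective (algebraMap R S)) (hFCP : IsFCPExt R S)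
    (hflat : ∀ T : Subalgebra R S, Module.Flat R T)
    (hepi : ∀ T : Subalgebra R S,
      CategoryTheory.Epi (CommRingCat.ofHom (algebraMap R T))) :
    IsCatenarianExt R S := by
  have := isModularLattice_subalgebra hflat fun T ↦ CommRingCat.epi_iff_epi.mp (hepi T)
  rintro n m c d ⟨hc0, hc1, hc⟩ ⟨hd0, hd1, hd⟩
  let s : CompositionSeries (Subalgebra R S) := ⟨n, c, hc⟩
  let t : CompositionSeries (Subalgebra R S) := ⟨m, d, hd⟩
  exact (CompositionSeries.jordan_holder s t (hc0.trans hd0.symm) (hc1.trans hd1.symm)).length_eq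
end

section
/- Let R ⊆ S be an FCP ring extension and let R̄ be the integral closure of R in S. Then R ⊆ S is catenarian if and only if R ⊆ R̄ is catenarian. -/
open Polynomial

namespace FCPCat

section Algebraic

variable {R S : Type*} [CommRing R] [CommRing S] [Algebra R S]

/-! ### Integral closure as an operator on subalgebras -/

/-- The integral closure of the subalgebra `A` in `S`, viewed as an `R`-subalgebra. -/
def ic (A : Subalgebra R S) : Subalgebra R S :=
  (integralClosure A S).restrictScalars R

/-- The subalgebra `A[x]`, viewed as an `R`-subalgebra. -/
def adj (A : Subalgebra R S) (x : S) : Subalgebra R S :=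
  (Algebra.adjoin A {x}).restrictScalars R

lemma mem_ic {A : Subalgebra R S} {x : S} : x ∈ ic A ↔ IsIntegral A x := Iff.rfl

lemma le_ic (A : Subalgebra R S) : A ≤ ic A := fun x hx =>
  mem_ic.2 (isIntegral_algebraMap (R := A) (x := ⟨x, hx⟩))

lemma ic_mono {A B : Subalgebra R S} (h : A ≤ B) : ic A ≤ ic B := by
  intro x hx
  let _ := (Subalgebra.inclusion h).toRingHom.toAlgebra
  have : IsScalarTower A B S := IsScalarTower.of_algebraMap_eq fun _ => rfl
  exact IsIntegral.tower_top (R := A) (A := B) (mem_ic.1 hx)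

lemma ic_ic (A : Subalgebra R S) : ic (ic A) = ic A := by
  refine le_antisymm (fun x hx => ?_) (le_ic _)
  have : Algebra.IsIntegral A (integralClosure A S) := inferInstance
  exact mem_ic.2 (isIntegral_trans (R := A) (A := integralClosure A S) x hx)

lemma ic_bot : ic (⊥ : Subalgebra R S) = integralClosure R S := by
  refine le_antisymm (fun x hx => ?_) (fun x hx => ?_)
  · have : Algebra.IsIntegral R (⊥ : Subalgebra R S) := by
      refine ⟨fun y => ?_⟩
      obtain ⟨r, hr⟩ := Algebra.mem_bot.1 y.2
      have : y = algebraMap R _ r := Subtype.ext hr.symm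
      rw [this]
      exact isIntegral_algebraMap
    exact isIntegral_trans (R := R) (A := (⊥ : Subalgebra R S)) x hx
  · exact IsIntegral.tower_top (R := R) (A := (⊥ : Subalgebra R S)) hx

lemma ic_eq_of_le {A B : Subalgebra R S} (h : A ≤ B) (h' : B ≤ ic A) : ic B = ic A :=
  le_antisymm ((ic_mono h').trans (ic_ic A).le) (ic_mono h)

lemma adj_le {A B : Subalgebra R S} {x : S} (h : A ≤ B) (hx : x ∈ B) : adj A x ≤ B := by
  intro y hy
  refine Algebra.adjoin_induction (R := A) (s := {x}) (p := fun y _ => y ∈ B) ?_ ?_ ?_ ?_ hy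
  · rintro y rfl; exact hx
  · exact fun r => h r.2
  · exact fun _ _ _ _ h1 h2 => B.add_mem h1 h2
  · exact fun _ _ _ _ h1 h2 => B.mul_mem h1 h2

lemma le_adj (A : Subalgebra R S) (x : S) : A ≤ adj A x := fun y hy =>
  (Algebra.adjoin A {x}).algebraMap_mem ⟨y, hy⟩

lemma self_mem_adj (A : Subalgebra R S) (x : S) : x ∈ adj A x :=
  Algebra.subset_adjoin (R := A) (Set.mem_singleton x)

/-! ### The Prüfer property and normal pairs -/

/-- If `A` is integrally closed in `B` and `x ∈ B` is a root of `q ∈ A[X]`, every coefficient of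
`q` lies in `I + I x`, where `I` is the ideal of all `r ∈ A` with `r x ∈ A`. The induction
replaces `a Xᵈ⁺¹ + b Xᵈ + ⋯` by `(a x + b) Xᵈ + ⋯`; here `a x ∈ A` because it is integral. -/
lemma coeff_decomp {A B : Subalgebra R S} (hc : B ⊓ ic A ≤ A) (hAB : A ≤ B)
    {x : S} (hx : x ∈ B) (d : ℕ) :
    ∀ q : A[X], q.natDegree ≤ d → aeval x q = 0 → ∀ i, ∃ u ∈ A, ∃ v ∈ A,
      u * x ∈ A ∧ v * x ∈ A ∧ u + v * x = (q.coeff i : S) := by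
  induction d with
  | zero =>
    intro q hq h0 i
    refine ⟨0, A.zero_mem, 0, A.zero_mem, by simp, by simp, ?_⟩
    replace hq := eq_C_of_natDegree_le_zero hq
    rw [hq, aeval_C] at h0
    rw [hq, coeff_C]
    split_ifs
    · simpa using h0.symm
    · simp
  | succ d ih =>
    intro q hq h0 i
    have hax : (q.coeff (d + 1) : S) * x ∈ A := by
      by_cases hdeg : q.natDegree = d + 1
      · apply hc
        refine ⟨B.mul_mem (hAB (q.coeff (d+1)).2) hx, ?_⟩
        have := isIntegral_leadingCoeff_smul q x h0
        rw [leadingCoeff, hdeg] at this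
        exact mem_ic.2 this
      · rw [coeff_eq_zero_of_natDegree_lt (by omega)]
        simp
    set a := q.coeff (d + 1) with ha
    set c : A := ⟨a * x, hax⟩ with hcdef
    have key := ih (q - C a * X ^ (d + 1) + C c * X ^ d) ?_ ?_
    · have hi : i = d + 1 ∨ i = d ∨ (i ≠ d + 1 ∧ i ≠ d) := by omega
      rcases hi with rfl | rfl | ⟨h1, h2⟩
      · exact ⟨a, a.2, 0, A.zero_mem, hax, by simp, by simp [ha]⟩
      · obtain ⟨u, hu, v, hv, hux, hvx, he⟩ := key i
        refine ⟨u, hu, v - a, A.sub_mem hv a.2, hux, ?_, ?_⟩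
        · rw [sub_mul]; exact A.sub_mem hvx hax
        · simp [hcdef, coeff_X_pow] at he
          linear_combination he
      · obtain ⟨u, hu, v, hv, hux, hvx, he⟩ := key i
        refine ⟨u, hu, v, hv, hux, hvx, ?_⟩
        simpa [coeff_X_pow, h1, h2] using he
    · rw [natDegree_le_iff_coeff_eq_zero]
      intro N hN
      rcases eq_or_ne N (d + 1) with rfl | hN'
      · simp [coeff_X_pow, ha]
      · have : q.coeff N = 0 := coeff_eq_zero_of_natDegree_lt (by omega)
        simp [coeff_X_pow, hN', this, show N ≠ d by omega]
    · simp only [map_add, map_sub, map_mul, aeval_C, h0, map_pow, aeval_X]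
      change 0 - (a : S) * x ^ (d + 1) + ((a : S) * x) * x ^ d = 0
      ring

/-- The Prüfer property of an integrally closed extension `A ⊆ B` with the descending chain
condition on intermediate rings. Stabilisation of `A[x] ⊇ A[x²] ⊇ A[x⁴] ⊇ ⋯` makes `x` a root of
a polynomial over `A` with a coefficient `-1`. -/
lemma pruefer [WellFoundedLT (Subalgebra R S)] {A B : Subalgebra R S} (hc : B ⊓ ic A ≤ A)
    (hAB : A ≤ B) {x : S} (hx : x ∈ B) :
    ∃ u ∈ A, ∃ v ∈ A, u * x ∈ A ∧ v * x ∈ A ∧ u + v * x = 1 := by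
  have hanti : Antitone fun k : ℕ => adj A (x ^ 2 ^ k) := by
    refine antitone_nat_of_succ_le fun k => adj_le (le_adj _ _) ?_
    rw [pow_succ, pow_mul]
    exact pow_mem (self_mem_adj _ _) _
  obtain ⟨k, hk⟩ := WellFoundedLT.antitone_chain_condition hanti
  have hmem : x ^ 2 ^ k ∈ adj A (x ^ 2 ^ (k + 1)) := by
    have : adj A (x ^ 2 ^ k) = adj A (x ^ 2 ^ (k + 1)) := hk (k + 1) (by omega)
    rw [← this]
    exact self_mem_adj _ _
  obtain ⟨p, hp⟩ := Algebra.adjoin_eq_exists_aeval A (x ^ 2 ^ (k + 1)) ⟨_, hmem⟩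
  simp only at hp
  have hroot : aeval x (X ^ 2 ^ k - expand A (2 ^ (k + 1)) p) = 0 := by
    rw [map_sub, expand_aeval, hp, map_pow, aeval_X, sub_self]
  obtain ⟨u, hu, v, hv, hux, hvx, he⟩ := coeff_decomp hc hAB hx _ _ le_rfl hroot (2 ^ k)
  refine ⟨u, hu, v, hv, hux, hvx, ?_⟩
  rw [he, coeff_sub, coeff_X_pow_self, coeff_expand (by positivity), if_neg, sub_zero]
  · rfl
  · intro h
    have := Nat.le_of_dvd (by positivity) h
    rw [pow_succ] at this
    have : 0 < 2 ^ k := by positivity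
    omega

/-- Integrally closed extensions with the descending chain condition are normal pairs. -/
lemma normal_pair [WellFoundedLT (Subalgebra R S)] {A B C : Subalgebra R S} (hc : C ⊓ ic A ≤ A)
    (hAB : A ≤ B) (hBC : B ≤ C) : C ⊓ ic B ≤ B := by
  rintro x ⟨hxC, hxB⟩
  obtain ⟨u, hu, v, hv, hux, hvx, he⟩ := pruefer hc (hAB.trans hBC) hxC
  obtain ⟨p, hpm, hp⟩ := mem_ic.1 hxB
  rw [← aeval_def, hpm.as_sum] at hp
  simp only [map_add, map_sum, map_mul, aeval_C, map_pow, aeval_X] at hp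
  generalize p.natDegree = n at hp
  have hpow : ∀ m j, j ≤ m → v ^ m * x ^ j ∈ B := by
    intro m j hj
    obtain ⟨l, rfl⟩ := Nat.exists_eq_add_of_le hj
    have : v ^ (j + l) * x ^ j = (v * x) ^ j * v ^ l := by ring
    rw [this]
    exact B.mul_mem (pow_mem (hAB hvx) _) (pow_mem (hAB hv) _)
  have hlow : ∀ m, (v * x) ^ m * x ∈ B → x ∈ B := by
    intro m
    induction m with
    | zero => intro h; simpa using h
    | succ m ih =>
      intro h
      apply ih
      have : (v * x) ^ m * x = (v * x) ^ m * (u * x) + (v * x) ^ (m + 1) * x := by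
        linear_combination (-(v * x) ^ m * x) * he
      rw [this]
      exact B.add_mem (B.mul_mem (pow_mem (hAB hvx) _) (hAB hux)) h
  cases n with
  | zero =>
    have h10 : (1 : S) = 0 := by simpa using hp
    have : x = 0 := by rw [← mul_one x, h10, mul_zero]
    rw [this]; exact B.zero_mem
  | succ m =>
    apply hlow m
    have : (v * x) ^ m * x =
        - ∑ i ∈ Finset.range (m + 1), algebraMap B S (p.coeff i) * (v ^ m * x ^ i) := by
      have h2 : ∑ i ∈ Finset.range (m + 1), algebraMap B S (p.coeff i) * (v ^ m * x ^ i) =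
          v ^ m * ∑ i ∈ Finset.range (m + 1), algebraMap B S (p.coeff i) * x ^ i := by
        rw [Finset.mul_sum]
        exact Finset.sum_congr rfl fun _ _ => by ring
      rw [h2]
      linear_combination v ^ m * hp
    rw [this]
    refine B.neg_mem (B.sum_mem fun i hi => B.mul_mem (p.coeff i).2 (hpow _ _ ?_))
    have := Finset.mem_range.1 hi
    omega

/-! ### Local comparability -/

/-- `T` and `U` are locally comparable over `A`: every element of `T ⊔ U` is carried into `T` and
into `U` by two elements of `A` with sum `1`. -/
def LocComp (A T U : Subalgebra R S) : Prop :=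
  ∀ x ∈ T ⊔ U, ∃ i ∈ A, ∃ j ∈ A, i + j = 1 ∧ i * x ∈ T ∧ j * x ∈ U

lemma LocComp.symm {A T U : Subalgebra R S} (h : LocComp A T U) : LocComp A U T := by
  intro x hx
  obtain ⟨i, hi, j, hj, he, h1, h2⟩ := h x (by rwa [sup_comm])
  exact ⟨j, hj, i, hi, by rw [add_comm, he], h2, h1⟩

/-- If products of elements of `T` and of `U` are sums of such elements, then `T ⊔ U = T + U`. -/
lemma mem_sup_of_mul {T U : Subalgebra R S}
    (h : ∀ t ∈ T, ∀ u ∈ U, ∃ t' ∈ T, ∃ u' ∈ U, t * u = t' + u') {x : S} (hx : x ∈ T ⊔ U) :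
    ∃ t ∈ T, ∃ u ∈ U, x = t + u := by
  let E : Subalgebra R S :=
    { carrier := {x | ∃ t ∈ T, ∃ u ∈ U, x = t + u}
      add_mem' := by
        rintro _ _ ⟨t, ht, u, hu, rfl⟩ ⟨t', ht', u', hu', rfl⟩
        exact ⟨t + t', T.add_mem ht ht', u + u', U.add_mem hu hu', by ring⟩
      mul_mem' := by
        rintro _ _ ⟨t, ht, u, hu, rfl⟩ ⟨t', ht', u', hu', rfl⟩
        obtain ⟨a, ha, b, hb, h1⟩ := h t ht u' hu'
        obtain ⟨c, hc, d, hd, h2⟩ := h t' ht' u hu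
        exact ⟨t * t' + a + c, T.add_mem (T.add_mem (T.mul_mem ht ht') ha) hc,
          u * u' + b + d, U.add_mem (U.add_mem (U.mul_mem hu hu') hb) hd,
          by linear_combination h1 + h2⟩
      algebraMap_mem' := fun r => ⟨_, T.algebraMap_mem r, 0, U.zero_mem, by simp⟩ }
  have hE : T ⊔ U ≤ E := sup_le (fun t ht => ⟨t, ht, 0, U.zero_mem, by simp⟩)
    (fun u hu => ⟨0, T.zero_mem, u, hu, by simp⟩)
  exact hE hx

lemma LocComp.covBy {A T U : Subalgebra R S} (h : LocComp A T U) (hT : A ≤ T)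
    (hcov : T ⊓ U ⋖ U) : T ⋖ T ⊔ U := by
  refine ⟨lt_of_le_of_ne le_sup_left fun he => ?_, fun V hTV hV => ?_⟩
  · have : U ≤ T := by rw [he]; exact le_sup_right
    exact hcov.lt.ne (inf_eq_right.2 this)
  · have h1 : T ⊓ U ≤ V ⊓ U := inf_le_inf_right _ hTV.le
    rcases hcov.eq_or_eq h1 inf_le_right with h2 | h2
    · refine hTV.not_ge fun x hx => ?_
      obtain ⟨i, hi, j, hj, he, hix, hjx⟩ := h x (hV.le hx)
      have h3 : j * x ∈ T ⊓ U := h2 ▸ ⟨V.mul_mem (hTV.le (hT hj)) hx, hjx⟩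
      have : x = i * x + j * x := by rw [← add_mul, he, one_mul]
      rw [this]
      exact T.add_mem hix h3.1
    · exact hV.not_ge (sup_le hTV.le (inf_eq_right.1 h2))

/-- Intermediate rings of a Prüfer extension are locally comparable. -/
lemma locComp_of_pruefer {A T U : Subalgebra R S}
    (hP : ∀ x : S, ∃ u ∈ A, ∃ v ∈ A, u * x ∈ A ∧ v * x ∈ A ∧ u + v * x = 1)
    (hT : A ≤ T) (hU : A ≤ U) : LocComp A T U := by
  have key : ∀ x ∈ T, ∀ y ∈ U, ∃ s ∈ A, ∃ t ∈ A, s + t = 1 ∧ s * x ∈ U ∧ t * y ∈ T := by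
    intro x hx y hy
    obtain ⟨u, hu, v, hv, huy, hvy, he⟩ := hP y
    obtain ⟨a, ha, b, hb, haz, hbz, he'⟩ := hP (x * v)
    refine ⟨a * (v * y), A.mul_mem ha hvy, (1 - a) + a * u,
      A.add_mem (A.sub_mem A.one_mem ha) (A.mul_mem ha hu), by linear_combination a * he, ?_, ?_⟩
    · have : a * (v * y) * x = (a * (x * v)) * y := by ring
      rw [this]
      exact U.mul_mem (hU haz) hy
    · have : (1 - a + a * u) * y = b * (v * y) * x + a * (u * y) := by
        linear_combination (-y) * he'
      rw [this]
      exact T.add_mem (T.mul_mem (hT (A.mul_mem hb hvy)) hx) (hT (A.mul_mem ha huy))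
  intro x hx
  obtain ⟨t, ht, u, hu, rfl⟩ := mem_sup_of_mul (T := T) (U := U) (fun t ht u hu => by
    obtain ⟨s, hs, r, hr, he, h1, h2⟩ := key t ht u hu
    exact ⟨t * (r * u), T.mul_mem ht h2, s * t * u, U.mul_mem h1 hu,
      by linear_combination (-t * u) * he⟩) hx
  obtain ⟨s, hs, r, hr, he, h1, h2⟩ := key t ht u hu
  refine ⟨r, hr, s, hs, by rw [add_comm, he], ?_, ?_⟩
  · rw [mul_add]; exact T.add_mem (T.mul_mem (hT hr) ht) h2
  · rw [mul_add]; exact U.add_mem h1 (U.mul_mem (hU hs) hu)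

/-! ### Minimal integral extensions and crosswise exchange -/

/-- Nakayama's lemma for a minimal integral extension `A ⊂ D`: if `D = A + uD + vD`, then some
element of `1 + (u, v)` multiplies `D` into `A`. -/
lemma nakayama_step {A D : Subalgebra R S} (hD : A ⋖ D) (hDi : D ≤ ic A) {u v : S} (hu : u ∈ A)
    (hv : v ∈ A) (h : ∀ x ∈ D, ∃ a ∈ A, ∃ c ∈ D, ∃ d ∈ D, x = a + u * c + v * d) :
    ∃ α ∈ A, ∃ β ∈ A, ∀ y ∈ D, (1 - (α * u + β * v)) * y ∈ A := by
  obtain ⟨z, hzD, hzA⟩ := SetLike.exists_of_lt hD.lt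
  have hadj : adj A z = D := by
    rcases hD.eq_or_eq (le_adj A z) (adj_le hD.le hzD) with h1 | h1
    · exact absurd (h1 ▸ self_mem_adj A z) hzA
    · exact h1
  have hfg : (Subalgebra.toSubmodule (Algebra.adjoin A {z})).FG :=
    (mem_ic.1 (hDi hzD)).fg_adjoin_singleton
  set M := Subalgebra.toSubmodule (Algebra.adjoin A {z}) with hM
  have hmemM : ∀ y, y ∈ M ↔ y ∈ D := fun y => by rw [← hadj]; rfl
  let A' : Submodule A S := Subalgebra.toSubmodule (⊥ : Subalgebra A S)
  have hmemA : ∀ y, y ∈ A' ↔ y ∈ A := fun y => by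
    change y ∈ (⊥ : Subalgebra A S) ↔ _
    rw [Algebra.mem_bot]
    exact ⟨fun ⟨w, hw⟩ => hw ▸ w.2, fun hw => ⟨⟨y, hw⟩, rfl⟩⟩
  let N := M.map A'.mkQ
  have hN : N.FG := hfg.map _
  let I : Ideal A := Ideal.span {⟨u, hu⟩, ⟨v, hv⟩}
  have hIN : N ≤ I • N := by
    rintro _ ⟨x, hx, rfl⟩
    obtain ⟨a, ha, c, hc, d, hd, rfl⟩ := h x ((hmemM x).1 hx)
    have h1 : A'.mkQ (a + u * c + v * d) =
        (⟨u, hu⟩ : A) • A'.mkQ c + (⟨v, hv⟩ : A) • A'.mkQ d := by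
      rw [map_add, map_add, ← map_smul, ← map_smul]
      have : A'.mkQ a = 0 := by
        rw [Submodule.mkQ_apply, Submodule.Quotient.mk_eq_zero]
        exact (hmemA a).2 ha
      rw [this, zero_add]
      rfl
    rw [h1]
    refine Submodule.add_mem _ (Submodule.smul_mem_smul ?_ ⟨c, (hmemM c).2 hc, rfl⟩)
      (Submodule.smul_mem_smul ?_ ⟨d, (hmemM d).2 hd, rfl⟩)
    · exact Ideal.subset_span (by simp)
    · exact Ideal.subset_span (by simp)
  obtain ⟨r, hr, hrN⟩ :=
    Submodule.exists_sub_one_mem_and_smul_eq_zero_of_fg_of_le_smul I N hN hIN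
  obtain ⟨α, β, hαβ⟩ := Ideal.mem_span_pair.1 hr
  refine ⟨-α, A.neg_mem α.2, -β, A.neg_mem β.2, fun y hy => ?_⟩
  have h2 := hrN _ ⟨y, (hmemM y).2 hy, rfl⟩
  rw [← map_smul, Submodule.mkQ_apply, Submodule.Quotient.mk_eq_zero, hmemA] at h2
  have h3 : (1 : S) - (-(α : S) * u + -(β : S) * v) = r := by
    have := congrArg (fun t : A => (t : S)) hαβ
    simp at this
    linear_combination this
  rw [h3]
  exact h2

/-- A minimal integral extension `D` of `A` and an extension `B` in which `A` is integrally closed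
have, locally on `A`, at least one of them equal to `A`. -/
lemma split_int_closed [WellFoundedLT (Subalgebra R S)] {A B D : Subalgebra R S} (hAB : A ≤ B)
    (hc : B ⊓ ic A ≤ A) (hD : A ⋖ D) (hDi : D ≤ ic A) {b : S} (hb : b ∈ B) :
    ∃ i ∈ A, ∃ j ∈ A, i + j = 1 ∧ i * b ∈ A ∧ ∀ y ∈ D, j * y ∈ A := by
  obtain ⟨u, hu, v, hv, hub, hvb, he⟩ := pruefer hc hAB hb
  -- `E = A + uD + vD` is a ring between `A` and `D`.
  let E : Subalgebra R S :=
    { carrier := {x | ∃ a ∈ A, ∃ c ∈ D, ∃ d ∈ D, x = a + u * c + v * d}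
      add_mem' := by
        rintro _ _ ⟨a, ha, c, hc, d, hd, rfl⟩ ⟨a', ha', c', hc', d', hd', rfl⟩
        exact ⟨a + a', A.add_mem ha ha', c + c', D.add_mem hc hc', d + d', D.add_mem hd hd',
          by ring⟩
      mul_mem' := by
        rintro _ _ ⟨a, ha, c, hc, d, hd, rfl⟩ ⟨a', ha', c', hc', d', hd', rfl⟩
        have hl := hD.le
        refine ⟨a * a', A.mul_mem ha ha', a * c' + c * (a' + u * c' + v * d'), ?_,
          a * d' + d * (a' + u * c' + v * d'), ?_, by ring⟩
        · exact D.add_mem (D.mul_mem (hl ha) hc') (D.mul_mem hc (D.add_mem (D.add_mem (hl ha')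
            (D.mul_mem (hl hu) hc')) (D.mul_mem (hl hv) hd')))
        · exact D.add_mem (D.mul_mem (hl ha) hd') (D.mul_mem hd (D.add_mem (D.add_mem (hl ha')
            (D.mul_mem (hl hu) hc')) (D.mul_mem (hl hv) hd')))
      algebraMap_mem' := fun r => ⟨_, A.algebraMap_mem r, 0, D.zero_mem, 0, D.zero_mem, by simp⟩ }
  have hAE : A ≤ E := fun a ha => ⟨a, ha, 0, D.zero_mem, 0, D.zero_mem, by simp⟩
  have hED : E ≤ D := by
    rintro _ ⟨a, ha, c, hc, d, hd, rfl⟩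
    exact D.add_mem (D.add_mem (hD.le ha) (D.mul_mem (hD.le hu) hc)) (D.mul_mem (hD.le hv) hd)
  rcases hD.eq_or_eq hAE hED with hE | hE
  · exfalso
    refine hD.lt.not_ge fun x hx => hc ⟨?_, hDi hx⟩
    have h1 : u * x ∈ A := hE ▸ ⟨0, A.zero_mem, x, hx, 0, D.zero_mem, by simp⟩
    have h2 : v * x ∈ A := hE ▸ ⟨0, A.zero_mem, 0, D.zero_mem, x, hx, by simp⟩
    have : x = u * x + v * x * b := by linear_combination (-x) * he
    rw [this]
    exact B.add_mem (hAB h1) (B.mul_mem (hAB h2) hb)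
  · obtain ⟨α, hα, β, hβ, hj⟩ := nakayama_step hD hDi hu hv (fun x hx => by
      have : x ∈ E := hE ▸ hx
      exact this)
    have hi : α * u + β * v ∈ A := A.add_mem (A.mul_mem hα hu) (A.mul_mem hβ hv)
    refine ⟨_, hi, _, A.sub_mem A.one_mem hi, by ring, ?_, hj⟩
    have : (α * u + β * v) * b = α * (u * b) + β * (v * b) := by ring
    rw [this]
    exact A.add_mem (A.mul_mem hα hub) (A.mul_mem hβ hvb)

lemma locComp_int_closed [WellFoundedLT (Subalgebra R S)] {A B D : Subalgebra R S} (hAB : A ≤ B)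
    (hc : B ⊓ ic A ≤ A) (hD : A ⋖ D) (hDi : D ≤ ic A) : LocComp A D B := by
  intro x hx
  obtain ⟨d, hd, b, hb, rfl⟩ := mem_sup_of_mul (T := D) (U := B) (fun d hd b hb => by
    obtain ⟨i, hi, j, hj, he, h1, h2⟩ := split_int_closed hAB hc hD hDi hb
    exact ⟨d * (i * b), D.mul_mem hd (hD.le h1), j * d * b, B.mul_mem (hAB (h2 d hd)) hb,
      by linear_combination (-d * b) * he⟩) hx
  obtain ⟨i, hi, j, hj, he, h1, h2⟩ := split_int_closed hAB hc hD hDi hb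
  refine ⟨i, hi, j, hj, he, ?_, ?_⟩
  · rw [mul_add]; exact D.add_mem (D.mul_mem (hD.le hi) hd) (hD.le h1)
  · rw [mul_add]; exact B.add_mem (hAB (h2 d hd)) (B.mul_mem (hAB hj) hb)

/-- The square spanned by a minimal integral extension `A ⊂ D` and a minimal integrally closed
extension `A ⊂ B`: opposite sides are again minimal and of the same type. -/
lemma square [WellFoundedLT (Subalgebra R S)] {A B D : Subalgebra R S} (hB : A ⋖ B)
    (hc : B ⊓ ic A ≤ A) (hD : A ⋖ D) (hDi : D ≤ ic A) :
    D ⋖ D ⊔ B ∧ B ⋖ D ⊔ B ∧ (D ⊔ B) ⊓ ic D ≤ D ∧ D ⊔ B ≤ ic B := by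
  have hl := locComp_int_closed hB.le hc hD hDi
  have hinf : D ⊓ B = A := le_antisymm (fun x hx => hc ⟨hx.2, hDi hx.1⟩) (le_inf hD.le hB.le)
  refine ⟨hl.covBy hD.le (by rwa [hinf]), ?_, ?_, ?_⟩
  · rw [sup_comm]
    exact hl.symm.covBy hB.le (by rwa [inf_comm, hinf])
  · rintro x ⟨hx, hxi⟩
    rw [ic_eq_of_le hD.le hDi] at hxi
    obtain ⟨i, hi, j, hj, he, h1, h2⟩ := hl x hx
    have : x = i * x + j * x := by rw [← add_mul, he, one_mul]
    rw [this]
    exact D.add_mem h1 (hD.le (hc ⟨h2, (ic A).mul_mem (le_ic A hj) hxi⟩))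
  · exact sup_le (hDi.trans (ic_mono hB.le)) (le_ic B)

/-- Crosswise exchange: a minimal integrally closed extension followed by a minimal integral one
can be replaced by a minimal integral extension followed by a minimal integrally closed one. -/
lemma exchange [WellFoundedLT (Subalgebra R S)] {A B C : Subalgebra R S} (hB : A ⋖ B)
    (hc : B ⊓ ic A ≤ A) (hC : B ⋖ C) (hCi : C ≤ ic B) :
    ∃ D, A ⋖ D ∧ D ≤ ic A ∧ D ⋖ C ∧ C ⊓ ic D ≤ D := by
  have hlt : A < C ⊓ ic A := by
    refine lt_of_le_not_ge (le_inf (hB.le.trans hC.le) (le_ic A)) fun h => ?_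
    exact hC.lt.not_ge fun x hx => normal_pair h hB.le hC.le ⟨hx, hCi hx⟩
  obtain ⟨D, hD, hDle⟩ := exists_covBy_le_of_lt hlt
  have hDi := hDle.trans inf_le_right
  obtain ⟨h1, h2, h3, -⟩ := square hB hc hD hDi
  have hDB : D ⊔ B = C := by
    refine (hC.eq_or_eq h2.le (sup_le (hDle.trans inf_le_left) hC.le)).resolve_left h2.lt.ne'
  rw [hDB] at h1 h3
  exact ⟨D, hD, hDi, h1, h3⟩

/-- A minimal extension is either integrally closed or integral. -/
lemma covBy_dichotomy {A B : Subalgebra R S} (hB : A ⋖ B) : B ⊓ ic A ≤ A ∨ B ≤ ic A := by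
  rcases hB.eq_or_eq (le_inf hB.le (le_ic A)) inf_le_left with h | h
  · exact Or.inl h.le
  · exact Or.inr (inf_eq_left.1 h)

end Algebraic

/-! ### Maximal chains -/

section Chains

/-- `MC T U n`: there is a maximal chain of length `n` from `T` to `U`. -/
inductive MC {α : Type*} [PartialOrder α] : α → α → ℕ → Prop
  | refl (T : α) : MC T T 0
  | cons {T V U : α} {n : ℕ} : T ⋖ V → MC V U n → MC T U (n + 1)

variable {α : Type*} [PartialOrder α]

lemma MC.le {T U : α} {n : ℕ} (h : MC T U n) : T ≤ U := by
  induction h with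
  | refl => exact le_rfl
  | cons h _ ih => exact h.le.trans ih

lemma MC.append {T V U : α} {n m : ℕ} (h : MC T V n) (h' : MC V U m) : MC T U (n + m) := by
  induction h with
  | refl => simpa using h'
  | cons hc _ ih => rw [Nat.add_right_comm]; exact .cons hc (ih h')

lemma mc_of_isMaxChain {U : α} (n : ℕ) : ∀ {T : α} {c : Fin (n + 1) → α},
    IsMaxChainFromTo T U n c → MC T U n := by
  induction n with
  | zero =>
    rintro T c ⟨h0, h1, -⟩
    have : T = U := h0.symm.trans h1
    exact this ▸ .refl _
  | succ n ih =>
    rintro T c ⟨h0, h1, h2⟩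
    refine .cons (V := c 1) ?_ (ih (c := fun i => c i.succ) ⟨rfl, ?_, fun i => ?_⟩)
    · simpa [h0] using h2 0
    · simpa using h1
    · simpa using h2 i.succ

lemma MC.exists_isMaxChain {T U : α} {n : ℕ} (h : MC T U n) :
    ∃ c, IsMaxChainFromTo T U n c := by
  induction h with
  | refl T => exact ⟨fun _ => T, rfl, rfl, fun i => i.elim0⟩
  | @cons T V U n hc _ ih =>
    obtain ⟨c, h0, h1, h2⟩ := ih
    refine ⟨Fin.cons T c, rfl, by simpa [← Fin.succ_last] using h1, fun i => ?_⟩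
    cases i using Fin.cases with
    | zero => simpa [h0] using hc
    | succ i => simpa [← Fin.succ_castSucc] using h2 i

lemma isCatenarianFromTo_iff {T U : α} :
    IsCatenarianFromTo T U ↔ ∀ n m, MC T U n → MC T U m → n = m := by
  refine ⟨fun h n m hn hm => ?_, fun h n m c d hc hd => ?_⟩
  · obtain ⟨c, hc⟩ := hn.exists_isMaxChain
    obtain ⟨d, hd⟩ := hm.exists_isMaxChain
    exact h n m c d hc hd
  · exact h n m (mc_of_isMaxChain n hc) (mc_of_isMaxChain m hd)

lemma exists_mc [WellFoundedLT α] [WellFoundedGT α] (U : α) (T : α) :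
    T ≤ U → ∃ n, MC T U n := by
  induction T using WellFoundedGT.induction with
  | ind T ih =>
    intro h
    rcases h.eq_or_lt with rfl | h
    · exact ⟨0, .refl _⟩
    · obtain ⟨V, hV, hVU⟩ := exists_covBy_le_of_lt h
      obtain ⟨n, hn⟩ := ih V hV.lt hVU
      exact ⟨n + 1, .cons hV hn⟩

end Chains

variable {R S : Type*} [CommRing R] [CommRing S] [Algebra R S]

lemma wellFounded_of_fcp (h : IsFCPExt R S) :
    WellFoundedLT (Subalgebra R S) ∧ WellFoundedGT (Subalgebra R S) := by
  have aux : ∀ f : ℕ → Subalgebra R S, f.Injective → (∀ m n, m ≤ n → f m ≤ f n ∨ f n ≤ f m) →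
      False := by
    intro f hf hm
    refine Set.infinite_range_of_injective hf (h _ ?_)
    rintro _ ⟨m, rfl⟩ _ ⟨n, rfl⟩ -
    rcases le_total m n with hmn | hmn
    · exact hm m n hmn
    · exact (hm n m hmn).symm
  constructor
  · refine ⟨RelEmbedding.wellFounded_iff_isEmpty.2 ⟨fun f => ?_⟩⟩
    have hf : StrictAnti f := fun a b hab => f.map_rel_iff.2 hab
    exact aux f hf.injective fun m n hmn => .inr (hf.antitone hmn)
  · refine ⟨RelEmbedding.wellFounded_iff_isEmpty.2 ⟨fun f => ?_⟩⟩
    have hf : StrictMono f := fun a b hab => f.map_rel_iff.2 hab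
    exact aux f hf.injective fun m n hmn => .inl (hf.monotone hmn)

/-! ### Jordan–Hölder and rearrangement of maximal chains -/

/-- Jordan–Hölder above an integrally closed subalgebra `K`. -/
lemma jordan_hoelder [WellFoundedLT (Subalgebra R S)] [WellFoundedGT (Subalgebra R S)]
    {K : Subalgebra R S} (hK : ic K ≤ K) (n : ℕ) :
    ∀ A : Subalgebra R S, K ≤ A → MC A ⊤ n → ∀ m, MC A ⊤ m → n = m := by
  have hP : ∀ x : S, ∃ u ∈ K, ∃ v ∈ K, u * x ∈ K ∧ v * x ∈ K ∧ u + v * x = 1 := fun x =>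
    pruefer (B := ⊤) (inf_le_right.trans hK) le_top (Algebra.mem_top (x := x))
  induction n with
  | zero =>
    intro A hA h m hm
    cases h
    cases hm with
    | refl => rfl
    | cons h _ => exact absurd h.lt not_top_lt
  | succ n ih =>
    intro A hA h m hm
    obtain _ | ⟨hT, hTn⟩ := h
    rename_i T
    cases hm with
    | refl => exact absurd hT.lt not_top_lt
    | @cons _ U _ m hU hUm =>
      by_cases hTU : T = U
      · subst hTU
        rw [ih T (hA.trans hT.le) hTn m hUm]
      · have hinf : T ⊓ U = A := by
          refine (hT.eq_or_eq (le_inf hT.le hU.le) inf_le_left).resolve_right fun h => hTU ?_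
          exact (hU.eq_or_eq hT.le (inf_eq_left.1 h)).resolve_left hT.lt.ne'
        have hl := locComp_of_pruefer hP (hA.trans hT.le) (hA.trans hU.le)
        have h1 : T ⋖ T ⊔ U := hl.covBy (hA.trans hT.le) (by rwa [hinf])
        have h2 : U ⋖ T ⊔ U := by
          rw [sup_comm]
          exact hl.symm.covBy (hA.trans hU.le) (by rwa [inf_comm, hinf])
        obtain ⟨k, hk⟩ := exists_mc ⊤ (T ⊔ U) le_top
        have e1 := ih T (hA.trans hT.le) hTn _ (.cons h1 hk)
        have e2 := ih U (hA.trans hU.le) (e1 ▸ .cons h2 hk) _ hUm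
        omega

/-- A minimal integrally closed step `A ⊂ B` can be moved above a maximal chain from `B` to its
integral closure. -/
lemma shift [WellFoundedLT (Subalgebra R S)] {B K : Subalgebra R S} {n : ℕ} (h : MC B K n) :
    K = ic B → ∀ A, A ⋖ B → B ⊓ ic A ≤ A → MC A (ic A) n ∧ ic A ⋖ ic B := by
  induction h with
  | refl B =>
    intro hK A hA hc
    have hAi : ic A = A := by
      by_contra hne
      obtain ⟨D, hD, hDi⟩ := exists_covBy_le_of_lt (lt_of_le_of_ne (le_ic A) (Ne.symm hne))
      obtain ⟨-, h2, -, h4⟩ := square hA hc hD hDi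
      exact h2.lt.not_ge (h4.trans hK.ge)
    rw [← hK, hAi]
    exact ⟨.refl _, hA⟩
  | @cons B C K n hC hCK ih =>
    intro hK A hA hc
    have hCi : C ≤ ic B := hCK.le.trans hK.le
    have hCB := ic_eq_of_le hC.le hCi
    obtain ⟨D, hD, hDi, hDC, hDc⟩ := exchange hA hc hC hCi
    obtain ⟨h1, h2⟩ := ih (hK.trans hCB.symm) D hDC hDc
    rw [ic_eq_of_le hD.le hDi] at h1 h2
    exact ⟨.cons hD h1, hCB ▸ h2⟩

/-- Every maximal chain from `A` to `S` can be replaced by one of the same length passing through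
the integral closure of `A`. -/
lemma sort_chain [WellFoundedLT (Subalgebra R S)] {A U : Subalgebra R S} {n : ℕ}
    (h : MC A U n) : U = ⊤ → ∃ p q, p + q = n ∧ MC A (ic A) p ∧ MC (ic A) ⊤ q := by
  induction h with
  | refl A =>
    rintro rfl
    have : ic (⊤ : Subalgebra R S) = ⊤ := top_le_iff.1 (le_ic _)
    rw [this]
    exact ⟨0, 0, rfl, .refl _, .refl _⟩
  | @cons A B U n hB _ ih =>
    intro hU
    obtain ⟨p, q, rfl, hp, hq⟩ := ih hU
    rcases covBy_dichotomy hB with hc | hi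
    · obtain ⟨h1, h2⟩ := shift hp rfl A hB hc
      exact ⟨p, q + 1, by omega, h1, .cons h2 hq⟩
    · rw [ic_eq_of_le hB.le hi] at hp hq
      exact ⟨p + 1, q, by omega, .cons hB hp, hq⟩

end FCPCat

/-- An FCP extension `R ⊆ S` is catenarian iff `R ⊆ R̄` is catenarian,
where `R̄` is the integral closure of `R` in `S`. -/
theorem stmt_6 {R S : Type*} [CommRing R] [CommRing S] [Algebra R S]
    (hinj : Function.Injective (algebraMap R S)) (hFCP : IsFCPExt R S) :
    IsCatenarianExt R S ↔
      IsCatenarianFromTo (⊥ : Subalgebra R S) (integralClosure R S) := by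
  obtain ⟨_, _⟩ := FCPCat.wellFounded_of_fcp hFCP
  rw [IsCatenarianExt, FCPCat.isCatenarianFromTo_iff, FCPCat.isCatenarianFromTo_iff,
    ← FCPCat.ic_bot]
  constructor
  · intro h n m hn hm
    obtain ⟨k, hk⟩ := FCPCat.exists_mc (α := Subalgebra R S) ⊤ (FCPCat.ic ⊥) le_top
    have := h _ _ (hn.append hk) (hm.append hk)
    omega
  · intro h n m hn hm
    obtain ⟨p, q, rfl, hp, hq⟩ := FCPCat.sort_chain hn rfl
    obtain ⟨p', q', rfl, hp', hq'⟩ := FCPCat.sort_chain hm rfl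
    rw [h p p' hp hp',
      FCPCat.jordan_hoelder (FCPCat.ic_ic _).le q (FCPCat.ic ⊥) le_rfl hq q' hq']
end

section
/- Let R ⊆ S be an FCP ring extension. The following statements are equivalent: (1) R ⊆ S is catenarian; (2) the localized extension R_M ⊆ S_M is catenarian for each M ∈ MSupp(S/R); (3) the localized extension R_P ⊆ S_P is catenarian for each P ∈ Supp(S/R). Here, for a prime P of R, S_P denotes the localization of S at the multiplicative set R ∖ P. -/
/-- `S/R` as an `R`-module. -/
abbrev extQuot (R S : Type*) [CommRing R] [CommRing S] [Algebra R S] :=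
  S ⧸ LinearMap.range (Algebra.linearMap R S)

/-! ### The crucial maximal ideal of a minimal extension -/

section Label

variable {R S : Type*} [CommRing R] [CommRing S] [Algebra R S]

/-- For `A ≤ B`, the elements of `A` that act non-injectively on `B / A`. When `B` covers `A`
this is the crucial maximal ideal of the minimal extension `A ⊂ B`, seen as a subset of `S`. -/
def crucial (A B : Subalgebra R S) : Set S :=
  {s | s ∈ A ∧ ∃ b ∈ B, b ∉ A ∧ s * b ∈ A}

/-- The elements of `B` carried into `A` by a power of `s ∈ A`. -/
def powInto (A B : Subalgebra R S) (s : S) (hs : s ∈ A) : Subalgebra R S where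
  carrier := {b | b ∈ B ∧ ∃ k : ℕ, s ^ k * b ∈ A}
  mul_mem' := by
    rintro a b ⟨ha, k, hk⟩ ⟨hb, l, hl⟩
    refine ⟨B.mul_mem ha hb, k + l, ?_⟩
    have := A.mul_mem hk hl
    convert this using 1
    ring
  add_mem' := by
    rintro a b ⟨ha, k, hk⟩ ⟨hb, l, hl⟩
    refine ⟨B.add_mem ha hb, k + l, ?_⟩
    have := A.add_mem (A.mul_mem (A.pow_mem hs l) hk) (A.mul_mem (A.pow_mem hs k) hl)
    convert this using 1
    ring
  algebraMap_mem' r := ⟨B.algebraMap_mem r, 0, by simp⟩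

/-- The subalgebra `A + sB` of `B`, for `A ≤ B` and `s ∈ A`. -/
def addMul (A B : Subalgebra R S) (hAB : A ≤ B) (s : S) (hs : s ∈ A) : Subalgebra R S where
  carrier := {x | ∃ a ∈ A, ∃ b ∈ B, x = a + s * b}
  mul_mem' := by
    rintro _ _ ⟨a, ha, b, hb, rfl⟩ ⟨a', ha', b', hb', rfl⟩
    refine ⟨a * a', A.mul_mem ha ha', a * b' + a' * b + s * b * b', ?_, by ring⟩
    exact B.add_mem (B.add_mem (B.mul_mem (hAB ha) hb') (B.mul_mem (hAB ha') hb))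
      (B.mul_mem (B.mul_mem (hAB hs) hb) hb')
  add_mem' := by
    rintro _ _ ⟨a, ha, b, hb, rfl⟩ ⟨a', ha', b', hb', rfl⟩
    exact ⟨a + a', A.add_mem ha ha', b + b', B.add_mem hb hb', by ring⟩
  algebraMap_mem' r := ⟨_, A.algebraMap_mem r, 0, B.zero_mem, by simp⟩

variable {A B : Subalgebra R S}

/-- If `B` covers `A`, then every element of the crucial ideal is locally nilpotent
on `B / A`. -/
lemma crucial_pow (h : A ⋖ B) {s : S} (hs : s ∈ crucial A B) {b : S} (hb : b ∈ B) :
    ∃ k : ℕ, s ^ k * b ∈ A := by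
  obtain ⟨hsA, x, hxB, hxA, hx⟩ := hs
  have h1 : A ≤ powInto A B s hsA := fun a ha => ⟨h.le ha, 0, by simpa using ha⟩
  have h2 : powInto A B s hsA ≤ B := fun a ha => ha.1
  rcases h.eq_or_eq h1 h2 with e | e
  · exact absurd (e ▸ (show x ∈ powInto A B s hsA from ⟨hxB, 1, by simpa using hx⟩)) hxA
  · rw [← e] at hb
    exact hb.2

lemma crucial_of_pow (h : A ⋖ B) {s : S} (hsA : s ∈ A)
    (hs : ∀ b ∈ B, ∃ k : ℕ, s ^ k * b ∈ A) : s ∈ crucial A B := by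
  obtain ⟨b, hb, hbA⟩ := SetLike.exists_of_lt h.lt
  obtain ⟨k, hk⟩ := hs b hb
  induction k with
  | zero => exact absurd (by simpa using hk) hbA
  | succ k ih =>
    by_cases hk' : s ^ k * b ∈ A
    · exact ih hk'
    · refine ⟨hsA, s ^ k * b, B.mul_mem (B.pow_mem (h.le hsA) k) hb, hk', ?_⟩
      convert hk using 1
      ring

lemma mem_of_not_crucial {s b : S} (hsA : s ∈ A) (hs : s ∉ crucial A B) (hb : b ∈ B)
    (h : s * b ∈ A) : b ∈ A := by
  by_contra hbA
  exact hs ⟨hsA, b, hb, hbA, h⟩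

lemma crucial_add (h : A ⋖ B) {s t : S} (hs : s ∈ crucial A B) (ht : t ∈ crucial A B) :
    s + t ∈ crucial A B := by
  refine crucial_of_pow h (A.add_mem hs.1 ht.1) fun b hb => ?_
  obtain ⟨k, hk⟩ := crucial_pow h hs hb
  obtain ⟨l, hl⟩ := crucial_pow h ht hb
  refine ⟨k + l, ?_⟩
  rw [add_pow, Finset.sum_mul]
  refine A.sum_mem fun i hi => ?_
  have hi' : i ≤ k + l := by simpa [Nat.lt_succ_iff] using hi
  -- in each binomial term, either `s` or `t` occurs with a sufficiently large exponent
  rcases le_total k i with hki | hki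
  · obtain ⟨j, rfl⟩ := Nat.exists_eq_add_of_le hki
    have := A.mul_mem (A.mul_mem (A.mul_mem (A.pow_mem hs.1 j)
      (A.pow_mem ht.1 (k + l - (k + j)))) (A.natCast_mem ((k + l).choose (k + j)))) hk
    convert this using 1
    ring
  · obtain ⟨j, hj⟩ := Nat.exists_eq_add_of_le (show l ≤ k + l - i by omega)
    rw [hj]
    have := A.mul_mem (A.mul_mem (A.mul_mem (A.pow_mem hs.1 i)
      (A.pow_mem ht.1 j)) (A.natCast_mem ((k + l).choose i))) hl
    convert this using 1
    ring

lemma crucial_mul {s t : S} (hs : s ∈ A) (ht : t ∈ crucial A B) : s * t ∈ crucial A B := by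
  obtain ⟨htA, b, hb, hbA, h⟩ := ht
  refine ⟨A.mul_mem hs htA, b, hb, hbA, ?_⟩
  rw [mul_assoc]
  exact A.mul_mem hs h

lemma crucial_prime (h : A ⋖ B) {s t : S} (hs : s ∈ A) (ht : t ∈ A)
    (hst : s * t ∈ crucial A B) : s ∈ crucial A B ∨ t ∈ crucial A B := by
  by_contra! hcon
  obtain ⟨-, b, hb, hbA, hm⟩ := hst
  refine hbA (mem_of_not_crucial ht hcon.2 hb (mem_of_not_crucial hs hcon.1
    (B.mul_mem (h.le ht) hb) ?_))
  rwa [← mul_assoc]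

lemma one_not_crucial : (1 : S) ∉ crucial A B := by
  rintro ⟨-, b, -, hbA, h⟩
  exact hbA (by simpa using h)

lemma zero_crucial (h : A ⋖ B) : (0 : S) ∈ crucial A B := by
  obtain ⟨b, hb, hbA⟩ := SetLike.exists_of_lt h.lt
  exact ⟨A.zero_mem, b, hb, hbA, by simp⟩

/-- Degree reduction: if `A` is integrally closed in `B`, `s` acts injectively on `B / A`
and `y ∈ s • A[y]`, then `(1 - s * a) * y ∈ A` for some `a ∈ A`. The leading coefficient `c` of
the relation `y = s * p(y)` of degree `n ≥ 2` satisfies `s * c * y ∈ A` by integrality, hence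
`c * y ∈ A`, and the leading term can be absorbed into the coefficient of degree `n - 1`. -/
lemma exists_of_eq_smul_aeval (hAB : A ≤ B)
    (hint : ∀ b ∈ B, IsIntegral A b → b ∈ A) {s : S} (hsA : s ∈ A)
    (hs : ∀ b ∈ B, s * b ∈ A → b ∈ A) {y : S} (hy : y ∈ B) (n : ℕ) :
    ∀ p : Polynomial A, p.natDegree ≤ n → y = s * Polynomial.aeval y p →
      ∃ a ∈ A, (1 - s * a) * y ∈ A := by
  induction n with
  | zero =>
    intro p hp hyp
    rw [Polynomial.eq_C_of_natDegree_le_zero hp, Polynomial.aeval_C] at hyp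
    refine ⟨0, A.zero_mem, ?_⟩
    have : s * (algebraMap A S (p.coeff 0)) ∈ A := A.mul_mem hsA (p.coeff 0).2
    rw [mul_zero, sub_zero, one_mul, hyp]
    exact this
  | succ n ih =>
    intro p hp hyp
    rcases Nat.eq_zero_or_pos n with rfl | hn
    · rw [Polynomial.eq_X_add_C_of_natDegree_le_one (p := p) (by simpa using hp)] at hyp
      simp only [map_add, map_mul, Polynomial.aeval_C, Polynomial.aeval_X] at hyp
      refine ⟨_, (p.coeff 1).2, ?_⟩
      have : s * (algebraMap A S (p.coeff 0)) ∈ A := A.mul_mem hsA (p.coeff 0).2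
      convert this using 1
      change (1 - s * algebraMap A S (p.coeff 1)) * y = _
      linear_combination hyp
    · by_cases hd : p.natDegree ≤ n
      · exact ih p hd hyp
      have hdeg : p.natDegree = n + 1 := by omega
      set c := p.leadingCoeff with hc
      let σ : A := ⟨s, hsA⟩
      have hq : Polynomial.aeval y (Polynomial.C σ * p - Polynomial.X) = 0 := by
        simp only [map_sub, map_mul, Polynomial.aeval_C, Polynomial.aeval_X]
        change s * _ - y = 0
        rw [← hyp, sub_self]
      have hcy : ((c : S) * y) ∈ A := by
        by_cases hσc : σ * c = 0
        · refine hs _ (B.mul_mem (hAB c.2) hy) ?_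
          have : s * (c : S) = 0 := congrArg Subtype.val hσc
          rw [← mul_assoc, this, zero_mul]
          exact A.zero_mem
        have hcoeff : (Polynomial.C σ * p - Polynomial.X).coeff (n + 1) = σ * c := by
          rw [Polynomial.coeff_sub, Polynomial.coeff_C_mul, Polynomial.coeff_X_of_ne_one (by omega),
            sub_zero, hc, Polynomial.leadingCoeff, hdeg]
        have hnd : (Polynomial.C σ * p - Polynomial.X).natDegree = n + 1 := by
          apply le_antisymm
          · refine (Polynomial.natDegree_sub_le _ _).trans (max_le ?_ ?_)
            · exact (Polynomial.natDegree_C_mul_le _ _).trans hp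
            · exact Polynomial.natDegree_X_le.trans (by omega)
          · exact Polynomial.le_natDegree_of_ne_zero (by rwa [hcoeff])
        have hi := isIntegral_leadingCoeff_smul _ _ hq
        rw [Polynomial.leadingCoeff, hnd, hcoeff, Algebra.smul_def] at hi
        have e : algebraMap A S (σ * c) * y = s * ((c : S) * y) := by
          rw [map_mul, mul_assoc]; rfl
        rw [e] at hi
        exact hs _ (B.mul_mem (hAB c.2) hy)
          (hint _ (B.mul_mem (hAB hsA) (B.mul_mem (hAB c.2) hy)) hi)
      refine ih (p.eraseLead + Polynomial.monomial n ⟨_, hcy⟩) ?_ ?_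
      · refine (Polynomial.natDegree_add_le _ _).trans (max_le ?_ ?_)
        · exact (Polynomial.eraseLead_natDegree_le p).trans (by omega)
        · exact Polynomial.natDegree_monomial_le _
      · conv_lhs => rw [hyp, ← Polynomial.eraseLead_add_monomial_natDegree_leadingCoeff p]
        rw [map_add, map_add, Polynomial.aeval_monomial, Polynomial.aeval_monomial, hdeg, ← hc]
        change s * (_ + (c : S) * _) = s * (_ + ((c : S) * y) * _)
        ring

/-- The algebra generated over `A` by an element of `B \ A` is `B` when `B` covers `A`. -/
lemma adjoin_eq (h : A ⋖ B) {y : S} (hy : y ∈ B) (hyA : y ∉ A) :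
    (Algebra.adjoin A {y}).restrictScalars R = B := by
  have hle : A ≤ (Algebra.adjoin A {y}).restrictScalars R := fun a ha =>
    (Algebra.adjoin A {y}).algebraMap_mem ⟨a, ha⟩
  have hle' : (Algebra.adjoin A {y}).restrictScalars R ≤ B := by
    intro x hx
    change x ∈ Algebra.adjoin A {y} at hx
    induction hx using Algebra.adjoin_induction with
    | mem x hx => rw [Set.mem_singleton_iff.1 hx]; exact hy
    | algebraMap r => exact h.le r.2
    | add x z _ _ hx hz => exact B.add_mem hx hz
    | mul x z _ _ hx hz => exact B.mul_mem hx hz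
  refine (h.eq_or_eq hle hle').resolve_left fun e => hyA ?_
  rw [← e]
  exact Algebra.self_mem_adjoin_singleton A y

/-- The crucial ideal is maximal: elements of `A` outside it are invertible modulo it. -/
lemma crucial_maximal (h : A ⋖ B) {s : S} (hsA : s ∈ A) (hs : s ∉ crucial A B) :
    ∃ a ∈ A, 1 - s * a ∈ crucial A B := by
  have hinj : ∀ b ∈ B, s * b ∈ A → b ∈ A := fun b hb => mem_of_not_crucial hsA hs hb
  have hsum : addMul A B h.le s hsA = B := by
    refine (h.eq_or_eq (c := addMul A B h.le s hsA) ?_ ?_).resolve_left fun e => ?_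
    · exact fun a ha => ⟨a, ha, 0, B.zero_mem, by simp⟩
    · rintro _ ⟨a, ha, b, hb, rfl⟩
      exact B.add_mem (h.le ha) (B.mul_mem (h.le hsA) hb)
    · obtain ⟨b, hb, hbA⟩ := SetLike.exists_of_lt h.lt
      refine hbA (hinj b hb ?_)
      rw [← e]
      exact ⟨0, A.zero_mem, b, hb, by simp⟩
  have hsum' : ∀ b ∈ B, ∃ a ∈ A, ∃ c ∈ B, b = a + s * c := fun b hb => by
    rw [← hsum] at hb; exact hb
  by_cases hint : ∀ b ∈ B, IsIntegral A b → b ∈ A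
  · obtain ⟨b, hb, hbA⟩ := SetLike.exists_of_lt h.lt
    obtain ⟨a, ha, c, hc, rfl⟩ := hsum' b hb
    have hy : s * c ∈ B := B.mul_mem (h.le hsA) hc
    have hyA : s * c ∉ A := fun hm => hbA (A.add_mem ha hm)
    have hcB := hc
    rw [← adjoin_eq h hy hyA] at hcB
    change c ∈ Algebra.adjoin A {s * c} at hcB
    rw [Algebra.adjoin_singleton_eq_range_aeval] at hcB
    obtain ⟨p, hp⟩ := hcB
    obtain ⟨a', ha', hm⟩ := exists_of_eq_smul_aeval h.le hint hsA hinj hy p.natDegree p le_rfl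
      (by change s * c = s * (Polynomial.aeval (s * c)).toRingHom p; rw [hp])
    exact ⟨a', ha', A.sub_mem A.one_mem (A.mul_mem hsA ha'), s * c, hy, hyA, hm⟩
  · push Not at hint
    obtain ⟨y, hy, hyi, hyA⟩ := hint
    let N : Submodule A S := Subalgebra.toSubmodule (Algebra.adjoin A {y})
    have hN : ∀ x, x ∈ N ↔ x ∈ B := fun x => by rw [← adjoin_eq h hy hyA]; rfl
    let σ : A := ⟨s, hsA⟩
    obtain ⟨r, hr, hrN⟩ := Submodule.exists_sub_one_mem_and_smul_le_of_fg_of_le_sup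
      (I := Ideal.span {σ}) (N := (1 : Submodule A S)) (N' := N) (P := N)
      hyi.fg_adjoin_singleton le_rfl (by
        intro x hx
        obtain ⟨a, ha, c, hc, rfl⟩ := hsum' x ((hN x).1 hx)
        refine Submodule.add_mem_sup ?_ ?_
        · exact Submodule.mem_one.2 ⟨⟨a, ha⟩, rfl⟩
        · exact Submodule.smul_mem_smul (Ideal.mem_span_singleton_self σ) ((hN c).2 hc))
    obtain ⟨a, ha⟩ := Ideal.mem_span_singleton.1 hr
    have hra : (r : S) = 1 - s * (-a : A) := by
      have : (r : S) - 1 = s * a := congrArg Subtype.val ha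
      push_cast
      linear_combination this
    refine ⟨_, (-a : A).2, ?_⟩
    rw [← hra]
    refine ⟨r.2, y, hy, hyA, ?_⟩
    obtain ⟨z, hz⟩ := Submodule.mem_one.1 (hrN (Submodule.smul_mem_pointwise_smul y r N ((hN y).2 hy)))
    have : (r : S) * y = z := hz.symm
    rw [this]
    exact z.2

/-- The contraction to `R` of the crucial maximal ideal of a covering `A ⋖ B`. -/
def label (h : A ⋖ B) : PrimeSpectrum R where
  asIdeal :=
    { carrier := {r | algebraMap R S r ∈ crucial A B}
      add_mem' := fun {a b} ha hb => by
        change algebraMap R S (a + b) ∈ crucial A B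
        rw [map_add]
        exact crucial_add h ha hb
      zero_mem' := by
        change algebraMap R S 0 ∈ crucial A B
        rw [map_zero]
        exact zero_crucial h
      smul_mem' := fun a b hb => by
        change algebraMap R S (a * b) ∈ crucial A B
        rw [map_mul]
        exact crucial_mul (A.algebraMap_mem a) hb }
  isPrime :=
    { ne_top' := fun e => one_not_crucial (A := A) (B := B) (by
        have : (1 : R) ∈ (⊤ : Ideal R) := trivial
        rw [← e] at this
        simpa using (show algebraMap R S 1 ∈ crucial A B from this))
      mem_or_mem' := fun {a b} hab => by
        have hab' : algebraMap R S (a * b) ∈ crucial A B := hab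
        rw [map_mul] at hab'
        exact crucial_prime h (A.algebraMap_mem a) (A.algebraMap_mem b) hab' }

lemma mem_label (h : A ⋖ B) {r : R} :
    r ∈ (label h).asIdeal ↔ algebraMap R S r ∈ crucial A B := Iff.rfl

end Label

/-! ### Saturation with respect to a multiplicative set -/

section Saturation

variable {R S : Type*} [CommRing R] [CommRing S] [Algebra R S]

/-- The contraction to `S` of the localization `A_W`: the elements of `S` carried into `A` by some
element of `W`. -/
def sat (W : Submonoid R) (A : Subalgebra R S) : Subalgebra R S where
  carrier := {x | ∃ w ∈ W, algebraMap R S w * x ∈ A}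
  mul_mem' := by
    rintro a b ⟨v, hv, ha⟩ ⟨w, hw, hb⟩
    refine ⟨v * w, W.mul_mem hv hw, ?_⟩
    convert A.mul_mem ha hb using 1
    rw [map_mul]
    ring
  add_mem' := by
    rintro a b ⟨v, hv, ha⟩ ⟨w, hw, hb⟩
    refine ⟨v * w, W.mul_mem hv hw, ?_⟩
    convert A.add_mem (A.mul_mem (A.algebraMap_mem w) ha) (A.mul_mem (A.algebraMap_mem v) hb)
      using 1
    rw [map_mul]
    ring
  algebraMap_mem' r := ⟨1, W.one_mem, by simp⟩

variable {W : Submonoid R} {A B : Subalgebra R S}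

lemma mem_sat {x : S} : x ∈ sat W A ↔ ∃ w ∈ W, algebraMap R S w * x ∈ A := Iff.rfl

lemma le_sat : A ≤ sat W A := fun x hx => ⟨1, W.one_mem, by simpa using hx⟩

lemma sat_mono (h : A ≤ B) : sat W A ≤ sat W B := fun _ ⟨w, hw, hx⟩ => ⟨w, hw, h hx⟩

lemma sat_sat : sat W (sat W A) = sat W A := by
  refine le_antisymm ?_ le_sat
  rintro x ⟨w, hw, v, hv, hx⟩
  refine ⟨v * w, W.mul_mem hv hw, ?_⟩
  rwa [map_mul, mul_assoc]

lemma sat_top : sat W (⊤ : Subalgebra R S) = ⊤ := top_le_iff.1 le_sat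

lemma sat_anti {V W : Submonoid R} (h : V ≤ W) : sat V A ≤ sat W A :=
  fun _ ⟨w, hw, hx⟩ => ⟨w, h hw, hx⟩

/-- The elements of `A` carried into `T` by some element of `T` outside the crucial ideal of the
covering `A ⋖ B`. -/
def localPart (T : Subalgebra R S) (h : A ⋖ B) (hT : T ≤ A) : Subalgebra R S where
  carrier := {x | x ∈ A ∧ ∃ t ∈ T, t ∉ crucial A B ∧ t * x ∈ T}
  mul_mem' := by
    rintro a b ⟨haA, v, hv, hvc, ha⟩ ⟨hbA, w, hw, hwc, hb⟩
    refine ⟨A.mul_mem haA hbA, v * w, T.mul_mem hv hw, fun hc =>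
      (crucial_prime h (hT hv) (hT hw) hc).elim hvc hwc, ?_⟩
    convert T.mul_mem ha hb using 1
    ring
  add_mem' := by
    rintro a b ⟨haA, v, hv, hvc, ha⟩ ⟨hbA, w, hw, hwc, hb⟩
    refine ⟨A.add_mem haA hbA, v * w, T.mul_mem hv hw, fun hc =>
      (crucial_prime h (hT hv) (hT hw) hc).elim hvc hwc, ?_⟩
    convert T.add_mem (T.mul_mem hw ha) (T.mul_mem hv hb) using 1
    ring
  algebraMap_mem' r := ⟨A.algebraMap_mem r, 1, T.one_mem, one_not_crucial, by simp⟩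

/-- A covering whose label is not contained in `Q` becomes an equality at `Q`. -/
lemma sat_eq_of_not_label_le (h : A ⋖ B) {Q : PrimeSpectrum R} (hQ : ¬ label h ≤ Q) :
    sat Q.asIdeal.primeCompl A = sat Q.asIdeal.primeCompl B := by
  refine le_antisymm (sat_mono h.le) ?_
  obtain ⟨s, hs, hsQ⟩ := SetLike.not_le_iff_exists.1 (show ¬ (label h).asIdeal ≤ Q.asIdeal from hQ)
  rw [← sat_sat (A := A)]
  refine sat_mono fun b hb => ?_
  obtain ⟨k, hk⟩ := crucial_pow h ((mem_label h).1 hs) hb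
  exact ⟨s ^ k, Submonoid.pow_mem _ (show s ∈ Q.asIdeal.primeCompl from hsQ) k, by rwa [map_pow]⟩

variable [WellFoundedLT (Subalgebra R S)]

/-- Above the saturation `T` of `R`, no element of `W` lies in a crucial ideal. Let `A ⋖ B` be a
minimal counterexample, with `w ∈ W` in its crucial ideal `Q`. If `A` and `T` had different
localizations at `Q ∩ T`, then the crucial ideal `M` of a covering of `localPart` would satisfy
`M ∩ T ⊆ Q` and `w ∉ M`, and `w` would be invertible modulo `M`, contradicting `w ∈ Q`. So for
`x ∈ B \ A` some `t ∉ Q` and some power of `w` bring `x` into `T`; as `T` is saturated,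
`t * x ∈ T ⊆ A`, a contradiction. -/
lemma not_crucial_of_sat_le (B : Subalgebra R S) :
    ∀ A : Subalgebra R S, sat W ⊥ ≤ A → A ⋖ B → ∀ w ∈ W, algebraMap R S w ∉ crucial A B := by
  induction B using WellFoundedLT.induction with
  | ind B ih =>
  intro A hTA h w hw hwc
  set T : Subalgebra R S := sat W ⊥ with hTdef
  have hTsat : sat W T = T := sat_sat
  have hfull : localPart T h hTA = A := by
    by_contra hne
    have hEA : localPart T h hTA ≤ A := fun x hx => hx.1
    have hTE : T ≤ localPart T h hTA := fun x hx =>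
      ⟨hTA hx, 1, T.one_mem, one_not_crucial, by simpa using hx⟩
    obtain ⟨D, hED, hDA⟩ := exists_covBy_le_of_lt (lt_of_le_of_ne hEA hne)
    have hsub : ∀ s ∈ T, s ∈ crucial (localPart T h hTA) D → s ∈ crucial A B := by
      intro s hsT hs
      by_contra hsc
      obtain ⟨-, d, hd, hdE, -, t', ht', ht'c, htt⟩ := hs
      refine hdE ⟨hDA hd, t' * s, T.mul_mem ht' hsT, fun hc =>
        (crucial_prime h (hTA ht') (hTA hsT) hc).elim ht'c hsc, ?_⟩
      rwa [mul_assoc]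
    have hwM := ih D (hDA.trans_lt h.lt) _ hTE hED w hw
    obtain ⟨a, ha, hM⟩ := crucial_maximal hED (Subalgebra.algebraMap_mem _ w) hwM
    obtain ⟨-, u, hu, huc, hua⟩ := id ha
    have h1 : u * (1 - algebraMap R S w * a) ∈ crucial (localPart T h hTA) D :=
      crucial_mul (hTE hu) hM
    have h2 : u * (1 - algebraMap R S w * a) ∈ T := by
      convert T.sub_mem hu (T.mul_mem (T.algebraMap_mem w) hua) using 1
      ring
    have h3 := hsub _ h2 h1
    have h4 : (u * a) * algebraMap R S w ∈ crucial A B := crucial_mul (hTA hua) hwc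
    refine huc ?_
    convert crucial_add h h3 h4 using 1
    ring
  obtain ⟨x, hx, hxA⟩ := SetLike.exists_of_lt h.lt
  obtain ⟨k, hk⟩ := crucial_pow h hwc hx
  have hk' := hk
  rw [← hfull] at hk'
  obtain ⟨-, t, ht, htc, htx⟩ := hk'
  refine hxA (mem_of_not_crucial (hTA ht) htc hx (hTA ?_))
  rw [← hTsat]
  refine ⟨w ^ k, W.pow_mem hw k, ?_⟩
  convert htx using 1
  rw [map_pow]
  ring

/-- Every subalgebra containing the saturation of `R` is saturated. -/
lemma sat_eq_of_sat_bot_le (hA : sat W ⊥ ≤ A) : sat W A = A := by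
  by_contra hne
  obtain ⟨D, hAD, hD⟩ := exists_covBy_le_of_lt (lt_of_le_of_ne (le_sat (W := W)) (Ne.symm hne))
  obtain ⟨d, hd, hdA⟩ := SetLike.exists_of_lt hAD.lt
  obtain ⟨w, hw, hwd⟩ := hD hd
  exact not_crucial_of_sat_le D A hA hAD w hw ⟨A.algebraMap_mem w, d, hd, hdA, hwd⟩

/-- A covering whose label is contained in `Q` remains a covering at `Q`. -/
lemma sat_covBy_of_label_le (h : A ⋖ B) {Q : PrimeSpectrum R} (hQ : label h ≤ Q) :
    sat Q.asIdeal.primeCompl A ⋖ sat Q.asIdeal.primeCompl B := by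
  refine ⟨lt_of_le_of_ne (sat_mono h.le) fun e => ?_, fun C hAC hCB => ?_⟩
  · obtain ⟨b, hb, hbA⟩ := SetLike.exists_of_lt h.lt
    have hb' : b ∈ sat Q.asIdeal.primeCompl A := by rw [e]; exact le_sat hb
    obtain ⟨w, hw, hwb⟩ := hb'
    exact hw (hQ ((mem_label h).2 ⟨A.algebraMap_mem w, b, hb, hbA, hwb⟩))
  · have hC : sat Q.asIdeal.primeCompl C = C :=
      sat_eq_of_sat_bot_le ((sat_mono bot_le).trans hAC.le)
    have h1 : A ≤ C ⊓ B := le_inf (le_sat.trans hAC.le) h.le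
    rcases h.eq_or_eq h1 inf_le_right with e | e
    · refine hAC.not_ge fun c hc => ?_
      obtain ⟨w, hw, hwc⟩ := hCB.le hc
      exact ⟨w, hw, e ▸ ⟨C.mul_mem (C.algebraMap_mem w) hc, hwc⟩⟩
    · refine hCB.not_ge ?_
      rw [← hC]
      exact sat_mono (inf_eq_right.1 e)

end Saturation

/-! ### Maximal chains in partial orders -/

section Chains

/-- `CovChain a b n`: there is a maximal chain of length `n` from `a` to `b`. -/
inductive CovChain {α : Type*} [PartialOrder α] : α → α → ℕ → Prop
  | nil (a : α) : CovChain a a 0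
  | cons {a b c : α} {n : ℕ} : a ⋖ b → CovChain b c n → CovChain a c (n + 1)

variable {α β : Type*} [PartialOrder α] [PartialOrder β]

lemma covChain_iff {a b : α} {n : ℕ} :
    CovChain a b n ↔ ∃ c, IsMaxChainFromTo a b n c := by
  constructor
  · intro h
    induction h with
    | nil a => exact ⟨fun _ => a, rfl, rfl, fun i => i.elim0⟩
    | @cons a b c n hab _ ih =>
      obtain ⟨f, h0, hl, hf⟩ := ih
      refine ⟨Fin.cons a f, rfl, by rw [← Fin.succ_last, Fin.cons_succ]; exact hl, fun i => ?_⟩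
      cases i using Fin.cases with
      | zero => simpa [h0] using hab
      | succ i =>
        rw [Fin.cons_succ, ← Fin.succ_castSucc, Fin.cons_succ]
        exact hf i
  · rintro ⟨f, h0, hl, hf⟩
    induction n generalizing a with
    | zero =>
      obtain rfl : a = b := h0.symm.trans hl
      exact CovChain.nil a
    | succ n ih =>
      refine CovChain.cons (b := f 1) ?_ (ih (fun i => f i.succ) rfl ?_ fun i => ?_)
      · rw [← h0]; exact hf 0
      · rw [Fin.succ_last]; exact hl
      · have := hf i.succ
        rwa [← Fin.succ_castSucc] at this

lemma isCatenarianFromTo_iff {a b : α} :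
    IsCatenarianFromTo a b ↔ ∀ n m, CovChain a b n → CovChain a b m → n = m := by
  simp only [covChain_iff]
  exact ⟨fun h n m ⟨c, hc⟩ ⟨d, hd⟩ => h n m c d hc hd,
    fun h n m c d hc hd => h n m ⟨c, hc⟩ ⟨d, hd⟩⟩

lemma CovChain.le {a b : α} {n : ℕ} (h : CovChain a b n) : a ≤ b := by
  induction h with
  | nil => exact le_rfl
  | cons hab _ ih => exact hab.le.trans ih

lemma CovChain.trans {a b c : α} {n m : ℕ} (h : CovChain a b n) (h' : CovChain b c m) :
    CovChain a c (n + m) := by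
  induction h with
  | nil => simpa using h'
  | cons hab _ ih =>
    rw [Nat.add_right_comm]
    exact CovChain.cons hab (ih h')

lemma exists_covChain [WellFoundedLT α] [WellFoundedGT α] {a b : α} (h : a ≤ b) :
    ∃ n, CovChain a b n := by
  induction a using WellFoundedGT.induction with
  | ind a ih =>
  rcases h.eq_or_lt with rfl | hlt
  · exact ⟨0, CovChain.nil a⟩
  · obtain ⟨x, hax, hxb⟩ := exists_covBy_le_of_lt hlt
    obtain ⟨n, hn⟩ := ih x hax.lt hxb
    exact ⟨n + 1, CovChain.cons hax hn⟩

/-- An upper segment of a catenarian interval is catenarian. -/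
lemma IsCatenarianFromTo.of_le [WellFoundedLT α] [WellFoundedGT α] {a b c : α}
    (hab : a ≤ b) (h : IsCatenarianFromTo a c) : IsCatenarianFromTo b c := by
  rw [isCatenarianFromTo_iff] at h ⊢
  intro n m hn hm
  obtain ⟨k, hk⟩ := exists_covChain hab
  have := h _ _ (hk.trans hn) (hk.trans hm)
  omega

lemma isCatenarianFromTo_self (a : α) : IsCatenarianFromTo a a := by
  rw [isCatenarianFromTo_iff]
  have key : ∀ n, CovChain a a n → n = 0 := by
    intro n h
    cases h with
    | nil => rfl
    | cons hab h' => exact absurd h'.le hab.lt.not_ge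
  intro n m hn hm
  rw [key n hn, key m hm]

/-- Catenarity transfers along an order embedding whose range is an upper set. -/
lemma isCatenarianFromTo_map (f : α ↪o β) (hf : IsUpperSet (Set.range f)) (a b : α) :
    IsCatenarianFromTo (f a) (f b) ↔ IsCatenarianFromTo a b := by
  have hcov : ∀ x y, f x ⋖ f y ↔ x ⋖ y := fun x y => hf.ordConnected.apply_covBy_apply_iff f
  have key : ∀ n a, CovChain (f a) (f b) n ↔ CovChain a b n := by
    intro n
    induction n with
    | zero =>
      intro a
      constructor
      · intro h
        generalize hx : f a = x at h
        generalize hy : f b = y at h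
        cases h
        rw [f.injective (hx.trans hy.symm)]
        exact CovChain.nil b
      · intro h
        cases h
        exact CovChain.nil _
    | succ n ih =>
      intro a
      constructor
      · intro h
        generalize hy : f b = y at h
        cases h with
        | cons hab h' =>
          subst hy
          obtain ⟨z, rfl⟩ := hf hab.le ⟨a, rfl⟩
          exact CovChain.cons ((hcov _ _).1 hab) ((ih z).1 h')
      · intro h
        cases h with
        | cons hab h' => exact CovChain.cons ((hcov _ _).2 hab) ((ih _).2 h')
  simp only [isCatenarianFromTo_iff, key]

open Classical in
/-- A multiset in a partial order is determined by the number of its elements below each point. -/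
lemma multiset_eq_of_countP_le (m m' : Multiset α) 
    (h : ∀ q, m.countP (· ≤ q) = m'.countP (· ≤ q)) : m = m' := by
  by_contra hne
  have hex : ∃ q, m.count q ≠ m'.count q := by
    by_contra! hcon
    exact hne (Multiset.ext.2 hcon)
  let F := (m + m').toFinset.filter fun q => m.count q ≠ m'.count q
  have hF : ∀ q, q ∈ F ↔ m.count q ≠ m'.count q := by
    intro q
    simp only [F, Finset.mem_filter, Multiset.mem_toFinset, Multiset.mem_add, and_iff_right_iff_imp]
    intro hq
    by_contra! hcon
    exact hq (by rw [Multiset.count_eq_zero_of_notMem hcon.1, Multiset.count_eq_zero_of_notMem hcon.2])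
  obtain ⟨q, hq⟩ := F.exists_minimal (hex.imp fun q hq => (hF q).2 hq)
  have hlt : m.filter (· < q) = m'.filter (· < q) := by
    refine Multiset.ext.2 fun p => ?_
    rw [Multiset.count_filter, Multiset.count_filter]
    split_ifs with hp
    · by_contra hc
      exact hp.not_ge (hq.2 ((hF p).2 hc) hp.le)
    · rfl
  have split : ∀ s : Multiset α, s.countP (· ≤ q) = (s.filter (· < q)).card + s.count q := by
    intro s
    induction s using Multiset.induction_on with
    | empty => simp
    | cons a s ih =>
      rw [Multiset.countP_cons, Multiset.filter_cons, Multiset.count_cons, ih]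
      rcases eq_or_ne a q with rfl | hne
      · simp; omega
      · by_cases hl : a < q
        · simp [hl, hl.le, hne.symm]; omega
        · have : ¬ a ≤ q := fun hle => hl (lt_of_le_of_ne hle hne)
          simp [hl, this, hne.symm]
  have := h q
  have e := (split m).symm.trans (this.trans (split m'))
  rw [hlt] at e
  exact (hF q).1 hq.1 (by omega)

end Chains

/-! ### Counting labels along maximal chains -/

section Labelled

variable {R S : Type*} [CommRing R] [CommRing S] [Algebra R S]

/-- `LabelledChain A B m`: there is a maximal chain from `A` to `B` whose labels, counted with
multiplicity, form the multiset `m`. -/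
inductive LabelledChain : Subalgebra R S → Subalgebra R S → Multiset (PrimeSpectrum R) → Prop
  | nil (A : Subalgebra R S) : LabelledChain A A 0
  | cons {A B C : Subalgebra R S} {m : Multiset (PrimeSpectrum R)} (h : A ⋖ B) :
      LabelledChain B C m → LabelledChain A C (label h ::ₘ m)

lemma CovChain.exists_labelled {A B : Subalgebra R S} {n : ℕ} (h : CovChain A B n) :
    ∃ m, LabelledChain A B m ∧ m.card = n := by
  induction h with
  | nil A => exact ⟨0, .nil A, rfl⟩
  | cons hab _ ih =>
    obtain ⟨m, hm, rfl⟩ := ih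
    exact ⟨_, .cons hab hm, Multiset.card_cons _ _⟩

open Classical in
/-- Localizing a maximal chain at `Q` leaves a maximal chain, whose length is the number of labels
contained in `Q`. -/
lemma LabelledChain.covChain_sat [WellFoundedLT (Subalgebra R S)] {A B : Subalgebra R S}
    {m : Multiset (PrimeSpectrum R)} (h : LabelledChain A B m) (Q : PrimeSpectrum R) :
    CovChain (sat Q.asIdeal.primeCompl A) (sat Q.asIdeal.primeCompl B)
      (m.countP (· ≤ Q)) := by
  induction h with
  | nil A => exact .nil _
  | cons hab _ ih =>
    by_cases hQ : label hab ≤ Q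
    · rw [Multiset.countP_cons_of_pos (p := (· ≤ Q)) _ hQ]
      exact .cons (sat_covBy_of_label_le hab hQ) ih
    · rw [Multiset.countP_cons_of_neg (p := (· ≤ Q)) _ hQ, sat_eq_of_not_label_le hab hQ]
      exact ih

/-- If all the localizations are catenarian, so is the extension: the number of labels contained in
each prime is the same for any two maximal chains, hence so are the multisets of labels. -/
lemma isCatenarianExt_of_sat [WellFoundedLT (Subalgebra R S)]
    (h : ∀ Q : PrimeSpectrum R,
      IsCatenarianFromTo (sat Q.asIdeal.primeCompl (⊥ : Subalgebra R S)) ⊤) :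
    IsCatenarianExt R S := by
  classical
  refine isCatenarianFromTo_iff.2 fun n n' hn hn' => ?_
  obtain ⟨m, hm, rfl⟩ := hn.exists_labelled
  obtain ⟨m', hm', rfl⟩ := hn'.exists_labelled
  congr 1
  refine multiset_eq_of_countP_le m m' fun Q => ?_
  have h1 := hm.covChain_sat Q
  have h2 := hm'.covChain_sat Q
  rw [sat_top] at h1 h2
  convert isCatenarianFromTo_iff.1 (h Q) _ _ h1 h2

end Labelled

/-! ### Subalgebras of a localized extension -/

section Localization

/-- Elements of `W` can be cancelled in subalgebras over `R_W`. -/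
lemma mem_of_mul_mem {R RW SW : Type*} [CommRing R] [CommRing RW] [CommRing SW] [Algebra R RW]
    [Algebra RW SW] {W : Submonoid R} [IsLocalization W RW] {C : Subalgebra RW SW} {w : R} (hw : w ∈ W) {x : SW}
    (h : algebraMap RW SW (algebraMap R RW w) * x ∈ C) : x ∈ C := by
  obtain ⟨u, hu⟩ := IsLocalization.map_units RW (⟨w, hw⟩ : W)
  have := C.mul_mem (C.algebraMap_mem (↑u⁻¹ : RW)) h
  rwa [← mul_assoc, ← map_mul, ← show (u : RW) = algebraMap R RW w from hu, Units.inv_mul,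
    map_one, one_mul] at this

lemma algebraMap_eq_iff {R S : Type*} [CommRing R] [CommRing S] [Algebra R S] {W : Submonoid R}
    (SW : Type*) [CommRing SW] [Algebra S SW] [IsLocalization (Algebra.algebraMapSubmonoid S W) SW]
    {x y : S} : algebraMap S SW x = algebraMap S SW y ↔
    ∃ w ∈ W, algebraMap R S w * x = algebraMap R S w * y := by
  rw [IsLocalization.eq_iff_exists (Algebra.algebraMapSubmonoid S W) SW]
  constructor
  · rintro ⟨⟨_, w, hw, rfl⟩, h⟩
    exact ⟨w, hw, h⟩
  · rintro ⟨w, hw, h⟩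
    exact ⟨⟨_, w, hw, rfl⟩, h⟩

variable {R S RW SW : Type*} [CommRing R] [CommRing S] [Algebra R S] [CommRing RW] [CommRing SW]
  [Algebra R RW] [Algebra S SW] [Algebra R SW] [Algebra RW SW] [IsScalarTower R S SW]
  [IsScalarTower R RW SW] (W : Submonoid R)
  [IsLocalization (Algebra.algebraMapSubmonoid S W) SW]

/-- Contraction to `S` of a subalgebra of the localized extension. -/
def contract (C : Subalgebra RW SW) : Subalgebra R S :=
  (C.restrictScalars R).comap (IsScalarTower.toAlgHom R S SW)

variable {W}

lemma mem_contract {C : Subalgebra RW SW} {x : S} :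
    x ∈ contract (R := R) C ↔ algebraMap S SW x ∈ C := Iff.rfl

variable (S RW SW) in
lemma algebraMap_tower (r : R) :
    algebraMap S SW (algebraMap R S r) = algebraMap RW SW (algebraMap R RW r) := by
  rw [← IsScalarTower.algebraMap_apply, ← IsScalarTower.algebraMap_apply]

variable (W) in
/-- Elements of `S_W` have denominators in `W`. -/
lemma exists_mul_eq (x : SW) : ∃ w ∈ W, ∃ s : S,
    algebraMap RW SW (algebraMap R RW w) * x = algebraMap S SW s := by
  obtain ⟨⟨s, ⟨_, w, hw, rfl⟩⟩, hs⟩ :=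
    IsLocalization.surj (Algebra.algebraMapSubmonoid S W) x
  refine ⟨w, hw, s, ?_⟩
  rw [← hs, ← algebraMap_tower S RW SW, mul_comm]

variable [IsLocalization W RW]

include W

lemma contract_le_iff {C D : Subalgebra RW SW} :
    contract (R := R) (S := S) C ≤ contract D ↔ C ≤ D := by
  refine ⟨fun h x hx => ?_, fun h x hx => h hx⟩
  obtain ⟨w, hw, s, hs⟩ := exists_mul_eq (S := S) (RW := RW) W x
  refine mem_of_mul_mem hw ?_
  rw [hs]
  refine h (x := s) ?_
  rw [mem_contract, ← hs]
  exact C.mul_mem (C.algebraMap_mem _) hx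

variable (RW SW)

lemma contract_bot : contract (⊥ : Subalgebra RW SW) = sat W (⊥ : Subalgebra R S) := by
  ext x
  rw [mem_contract, Algebra.mem_bot, mem_sat]
  constructor
  · rintro ⟨y, hy⟩
    obtain ⟨⟨r, w⟩, hr⟩ := IsLocalization.surj W y
    dsimp only at hr
    have : algebraMap S SW (algebraMap R S w * x) = algebraMap S SW (algebraMap R S r) := by
      rw [map_mul, algebraMap_tower S RW SW, algebraMap_tower S RW SW, ← hr, map_mul, ← hy, mul_comm]
    obtain ⟨v, hv, h⟩ := (algebraMap_eq_iff (W := W) SW).1 this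
    refine ⟨v * w, W.mul_mem hv w.2, ?_⟩
    rw [map_mul, mul_assoc, h, ← map_mul]
    exact Subalgebra.algebraMap_mem _ _
  · rintro ⟨w, hw, h⟩
    obtain ⟨r, hr⟩ := Algebra.mem_bot.1 h
    refine Algebra.mem_bot.1 (mem_of_mul_mem (R := R) hw ?_)
    rw [← algebraMap_tower S RW SW, ← map_mul, ← hr, algebraMap_tower S RW SW]
    exact Subalgebra.algebraMap_mem _ _

/-- Every saturated subalgebra is the contraction of a subalgebra of the localized extension. -/
lemma exists_contract_eq {A : Subalgebra R S} (hA : sat W A = A) :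
    ∃ C : Subalgebra RW SW, contract C = A := by
  let C : Subalgebra RW SW :=
    { carrier := {x | ∃ w ∈ W, ∃ a ∈ A,
        algebraMap RW SW (algebraMap R RW w) * x = algebraMap S SW a}
      mul_mem' := by
        rintro x y ⟨v, hv, a, ha, hx⟩ ⟨w, hw, b, hb, hy⟩
        refine ⟨v * w, W.mul_mem hv hw, a * b, A.mul_mem ha hb, ?_⟩
        rw [map_mul, map_mul, map_mul, ← hx, ← hy]
        ring
      add_mem' := by
        rintro x y ⟨v, hv, a, ha, hx⟩ ⟨w, hw, b, hb, hy⟩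
        refine ⟨v * w, W.mul_mem hv hw, algebraMap R S w * a + algebraMap R S v * b,
          A.add_mem (A.mul_mem (A.algebraMap_mem w) ha) (A.mul_mem (A.algebraMap_mem v) hb), ?_⟩
        rw [map_add, map_mul, map_mul, map_mul, map_mul, ← hx, ← hy, algebraMap_tower S RW SW,
          algebraMap_tower S RW SW]
        ring
      algebraMap_mem' := by
        intro y
        obtain ⟨⟨r, w⟩, hr⟩ := IsLocalization.surj W y
        dsimp only at hr
        refine ⟨w, w.2, algebraMap R S r, A.algebraMap_mem r, ?_⟩
        rw [algebraMap_tower S RW SW, ← hr, map_mul, mul_comm] }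
  refine ⟨C, le_antisymm (fun x hx => ?_) fun x hx => ⟨1, W.one_mem, x, hx, by simp⟩⟩
  obtain ⟨w, hw, a, ha, h⟩ := hx
  change _ * algebraMap S SW x = _ at h
  rw [← algebraMap_tower S RW SW, ← map_mul, algebraMap_eq_iff (W := W) SW] at h
  obtain ⟨v, hv, h⟩ := h
  rw [← hA]
  refine ⟨v * w, W.mul_mem hv hw, ?_⟩
  rw [map_mul, mul_assoc, h]
  exact A.mul_mem (A.algebraMap_mem v) ha

/-- Contraction identifies the subalgebras of the localized extension with those containing the
saturation of `R`, hence catenarity of the former is catenarity of an upper segment of `[R, S]`. -/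
lemma isCatenarianExt_localization [WellFoundedLT (Subalgebra R S)] :
    IsCatenarianExt RW SW ↔ IsCatenarianFromTo (sat W (⊥ : Subalgebra R S)) ⊤ := by
  let f : Subalgebra RW SW ↪o Subalgebra R S :=
    OrderEmbedding.ofMapLEIff contract fun _ _ => contract_le_iff (W := W)
  have hbot : f ⊥ = sat W ⊥ := contract_bot RW SW
  have hup : IsUpperSet (Set.range f) := by
    rintro _ B hB ⟨C, rfl⟩
    refine exists_contract_eq RW SW (sat_eq_of_sat_bot_le (W := W) ?_)
    rw [← hbot]
    exact (f.monotone bot_le).trans hB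
  rw [← hbot, show (⊤ : Subalgebra R S) = f ⊤ from rfl, isCatenarianFromTo_map f hup]
  rfl

end Localization

/-! ### FCP extensions and localization at a prime -/

section FCP

variable {R S : Type*} [CommRing R] [CommRing S] [Algebra R S]

/-- Outside the support of `S / R`, the saturation of `R` is all of `S`. -/
lemma sat_bot_eq_top (W : Submonoid R)
    (h : ¬ Nontrivial (LocalizedModule W (extQuot R S))) : sat W (⊥ : Subalgebra R S) = ⊤ := by
  rw [not_nontrivial_iff_subsingleton, LocalizedModule.subsingleton_iff] at h
  refine top_le_iff.1 fun x _ => ?_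
  obtain ⟨w, hw, hx⟩ := h (Submodule.Quotient.mk x)
  rw [← Submodule.Quotient.mk_smul, Submodule.Quotient.mk_eq_zero] at hx
  obtain ⟨r, hr⟩ := hx
  exact ⟨w, hw, Algebra.mem_bot.2 ⟨r, by rw [← Algebra.smul_def]; exact hr⟩⟩

/-- Catenarity of `R_P ⊆ S_P` expressed inside the lattice of `R`-subalgebras of `S`. -/
lemma isCatenarianExt_atPrime_iff [WellFoundedLT (Subalgebra R S)] (P : Ideal R) [P.IsPrime] :
    letI := localizationAlgebra P.primeCompl S
      (Rₘ := Localization.AtPrime P)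
      (Sₘ := Localization (Algebra.algebraMapSubmonoid S P.primeCompl))
    IsCatenarianExt (Localization.AtPrime P)
      (Localization (Algebra.algebraMapSubmonoid S P.primeCompl)) ↔
    IsCatenarianFromTo (sat P.primeCompl (⊥ : Subalgebra R S)) ⊤ := by
  let := localizationAlgebra P.primeCompl S
      (Rₘ := Localization.AtPrime P)
      (Sₘ := Localization (Algebra.algebraMapSubmonoid S P.primeCompl))
  have : IsScalarTower R (Localization.AtPrime P)
      (Localization (Algebra.algebraMapSubmonoid S P.primeCompl)) :=
    isScalarTower_localizationAlgebra P.primeCompl S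
  exact isCatenarianExt_localization _ _

end FCP

/-- For an FCP extension `R ⊆ S` the following are equivalent:
(1) `R ⊆ S` is catenarian; (2) `R_M ⊆ S_M` is catenarian for each maximal ideal
`M ∈ MSupp(S/R)`; (3) `R_P ⊆ S_P` is catenarian for each prime `P ∈ Supp(S/R)`. -/
theorem stmt_7 {R S : Type*} [CommRing R] [CommRing S] [Algebra R S]
    (hinj : Function.Injective (algebraMap R S)) (hFCP : IsFCPExt R S) :
    List.TFAE
      [ IsCatenarianExt R S,
        ∀ (M : Ideal R) (hM : M.IsMaximal),
          letI := hM.isPrime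
          Nontrivial (LocalizedModule M.primeCompl (extQuot R S)) →
            letI := localizationAlgebra M.primeCompl S
              (Rₘ := Localization.AtPrime M)
              (Sₘ := Localization (Algebra.algebraMapSubmonoid S M.primeCompl))
            IsCatenarianExt (Localization.AtPrime M)
              (Localization (Algebra.algebraMapSubmonoid S M.primeCompl)),
        ∀ (P : Ideal R) (hP : P.IsPrime),
          Nontrivial (LocalizedModule P.primeCompl (extQuot R S)) →
            letI := localizationAlgebra P.primeCompl S
              (Rₘ := Localization.AtPrime P)
              (Sₘ := Localization (Algebra.algebraMapSubmonoid S P.primeCompl))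
            IsCatenarianExt (Localization.AtPrime P)
              (Localization (Algebra.algebraMapSubmonoid S P.primeCompl)) ] := by
  have := hFCP.wellFoundedLT
  have := hFCP.wellFoundedGT
  tfae_have 1 → 3 := fun h P hP _ =>
    (isCatenarianExt_atPrime_iff P).2 (IsCatenarianFromTo.of_le bot_le h)
  tfae_have 3 → 2 := fun h M hM hne => h M hM.isPrime hne
  tfae_have 2 → 1 := by
    intro h
    refine isCatenarianExt_of_sat fun Q => ?_
    obtain ⟨M, hM, hQM⟩ := Ideal.exists_le_maximal Q.asIdeal Q.2.ne_top
    have := hM.isPrime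
    refine IsCatenarianFromTo.of_le (sat_anti (V := M.primeCompl) fun r hr hrQ => hr (hQM hrQ)) ?_
    by_cases hne : Nontrivial (LocalizedModule M.primeCompl (extQuot R S))
    · exact (isCatenarianExt_atPrime_iff M).1 (h M hM hne)
    · rw [sat_bot_eq_top _ hne]
      exact isCatenarianFromTo_self ⊤
  tfae_finish
end

section
/- Every infra-integral FCP ring extension R ⊆ S is catenarian. -/
/-- The residual extension `κ_R(P) → κ_S(Q)` (for `P = Q ∩ R`) is an isomorphism. -/
def ResidualExtIsIso {R S : Type*} [CommRing R] [CommRing S] (f : R →+* S)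
    (Q : Ideal S) [Q.IsPrime] : Prop :=
  Function.Bijective
    (IsLocalRing.ResidueField.map
      (Localization.localRingHom (Q.comap f) Q f rfl))

/-- `R ⊆ S` is infra-integral: it is integral and all residual extensions
are isomorphisms. -/
def IsInfraIntegral (R S : Type*) [CommRing R] [CommRing S] [Algebra R S] : Prop :=
  Algebra.IsIntegral R S ∧
    ∀ (Q : Ideal S) (_ : Q.IsPrime), ResidualExtIsIso (algebraMap R S) Q

/-- If `Q` is maximal and the residual extension at `Q` is an isomorphism, then `S = R + Q`. -/
lemma exists_sub_mem_of_residualExtIsIso {R S : Type*} [CommRing R] [CommRing S] [Algebra R S]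
    [Algebra.IsIntegral R S] (Q : Ideal S) [hQ : Q.IsMaximal]
    (h : ResidualExtIsIso (algebraMap R S) Q) (s : S) :
    ∃ r : R, s - algebraMap R S r ∈ Q := by
  have hP : (Q.comap (algebraMap R S)).IsMaximal :=
    Ideal.isMaximal_comap_of_isIntegral_of_isMaximal Q
  obtain ⟨z, hz⟩ := h.2 (IsLocalRing.residue _ (algebraMap S (Localization.AtPrime Q) s))
  obtain ⟨w, rfl⟩ := IsLocalRing.residue_surjective z
  rw [IsLocalRing.ResidueField.map_residue, ← sub_eq_zero, ← map_sub,
    IsLocalRing.residue_eq_zero_iff] at hz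
  obtain ⟨⟨r, a⟩, hra⟩ := IsLocalization.surj (Q.comap (algebraMap R S)).primeCompl w
  -- `w = r / a`, and clearing the denominator gives `r - a s ∈ Q`
  have h1 : algebraMap R S r - algebraMap R S a * s ∈ Q := by
    rw [← IsLocalization.AtPrime.to_map_mem_maximal_iff (Localization.AtPrime Q) Q]
    have h2 := congrArg (Localization.localRingHom (Q.comap (algebraMap R S)) Q
      (algebraMap R S) rfl) hra
    rw [map_mul, Localization.localRingHom_to_map, Localization.localRingHom_to_map] at h2
    rw [map_sub, map_mul, ← h2]
    have h3 := Ideal.mul_mem_left _ (algebraMap S (Localization.AtPrime Q)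
      (algebraMap R S (a : R))) hz
    convert h3 using 1
    ring
  obtain ⟨b, p, hp, hb⟩ := hP.exists_inv a.2
  have hp' : algebraMap R S p ∈ Q := hp
  refine ⟨b * r, ?_⟩
  have h4 : algebraMap R S b * algebraMap R S a + algebraMap R S p = 1 := by
    rw [← map_mul, ← map_add, hb, map_one]
  have h5 := Q.add_mem (Q.mul_mem_left (-algebraMap R S b) h1) (Q.mul_mem_right s hp')
  convert h5 using 1
  rw [map_mul]
  linear_combination -s * h4

section Cover

variable {R S : Type*} [CommRing R] [CommRing S] [Algebra R S] {T U : Subalgebra R S}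

/-- The subalgebra `U ⊇ T`, regarded as a `T`-submodule of `S`. -/
def overSubmodule (h : T ≤ U) : Submodule T S where
  carrier := U
  add_mem' := U.add_mem
  zero_mem' := U.zero_mem
  smul_mem' t _ hu := U.mul_mem (h t.2) hu

/-- If `J ⊆ U` is a `T`-submodule such that `T + J` is a ring, then `T + J` is `T` or `U`. -/
lemma CovBy.le_or_eq_add (h : T ⋖ U) (J : Submodule T S) (hJU : ∀ j ∈ J, j ∈ U)
    (hJ : ∀ i ∈ J, ∀ j ∈ J, ∃ t ∈ T, ∃ k ∈ J, i * j = t + k) :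
    (∀ j ∈ J, j ∈ T) ∨ ∀ u ∈ U, ∃ t ∈ T, ∃ j ∈ J, u = t + j := by
  have hs : ∀ t ∈ T, ∀ j ∈ J, t * j ∈ J := fun t ht j hj => J.smul_mem ⟨t, ht⟩ hj
  let V : Subalgebra R S :=
    { carrier := {u | ∃ t ∈ T, ∃ j ∈ J, u = t + j}
      add_mem' := by
        rintro _ _ ⟨t, ht, j, hj, rfl⟩ ⟨t', ht', j', hj', rfl⟩
        exact ⟨t + t', T.add_mem ht ht', j + j', J.add_mem hj hj', by ring⟩
      mul_mem' := by
        rintro _ _ ⟨t, ht, j, hj, rfl⟩ ⟨t', ht', j', hj', rfl⟩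
        obtain ⟨a, ha, k, hk, hak⟩ := hJ j hj j' hj'
        exact ⟨t * t' + a, T.add_mem (T.mul_mem ht ht') ha, t * j' + t' * j + k,
          J.add_mem (J.add_mem (hs _ ht _ hj') (hs _ ht' _ hj)) hk,
          by linear_combination hak⟩
      algebraMap_mem' := fun r => ⟨_, T.algebraMap_mem r, 0, J.zero_mem, by simp⟩ }
  have hTV : T ≤ V := fun t ht => ⟨t, ht, 0, J.zero_mem, by simp⟩
  have hVU : V ≤ U := by
    rintro _ ⟨t, ht, j, hj, rfl⟩
    exact U.add_mem (h.le ht) (hJU j hj)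
  rcases h.eq_or_eq hTV hVU with hV | hV
  · left
    intro j hj
    have : j ∈ V := ⟨0, T.zero_mem, j, hj, by simp⟩
    rwa [hV] at this
  · right
    intro u hu
    have : u ∈ V := by rwa [hV]
    exact this

/-- In a covering `T ⋖ U` of an integral extension, some maximal ideal `M` of `T` satisfies
`MU ⊆ T`. -/
lemma exists_isMaximal_smul_mem [Algebra.IsIntegral R S] (h : T ⋖ U) :
    ∃ M : Ideal T, M.IsMaximal ∧ ∀ m ∈ M, ∀ u ∈ U, (m : S) * u ∈ T := by
  obtain ⟨y, hyU, hyT⟩ := SetLike.exists_of_lt h.lt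
  have hy : IsIntegral T y := (Algebra.IsIntegral.isIntegral (R := R) y).tower_top
  have hU : Subalgebra.toSubmodule (Algebra.adjoin T {y}) = overSubmodule h.le := by
    have hle : (Algebra.adjoin T {y}).restrictScalars R ≤ U := by
      intro z hz
      replace hz : z ∈ Algebra.adjoin T {y} := hz
      induction hz using Algebra.adjoin_induction with
      | mem x hx => rw [Set.mem_singleton_iff.1 hx]; exact hyU
      | algebraMap t => exact h.le t.2
      | add a b _ _ ha hb => exact U.add_mem ha hb
      | mul a b _ _ ha hb => exact U.mul_mem ha hb
    have hTle : T ≤ (Algebra.adjoin T {y}).restrictScalars R := fun t ht =>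
      (Algebra.adjoin T {y}).algebraMap_mem ⟨t, ht⟩
    have hyA : y ∈ (Algebra.adjoin T {y}).restrictScalars R :=
      Algebra.self_mem_adjoin_singleton T y
    rcases h.eq_or_eq hTle hle with h1 | h1
    · exact absurd (h1 ▸ hyA) hyT
    · ext z
      change z ∈ (Algebra.adjoin T {y}).restrictScalars R ↔ z ∈ U
      rw [h1]
  have hfin : Module.Finite T (overSubmodule h.le) := by
    rw [← hU]
    exact Module.Finite.iff_fg.2 hy.fg_adjoin_singleton
  let T' : Submodule T (overSubmodule h.le) :=
    (overSubmodule (le_refl T)).comap (overSubmodule h.le).subtype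
  have hT' : T' ≠ ⊤ := fun hT => by
    have : (⟨y, hyU⟩ : overSubmodule h.le) ∈ T' := hT ▸ Submodule.mem_top
    exact hyT this
  obtain ⟨N, hN, hTN⟩ := (eq_top_or_exists_le_coatom T').resolve_left hT'
  have hsimple : IsSimpleModule T (overSubmodule h.le ⧸ N) := isSimpleModule_iff_isCoatom.2 hN
  have hann : ∀ m ∈ Module.annihilator T (overSubmodule h.le ⧸ N),
      ∀ u : overSubmodule h.le, m • u ∈ N := fun m hm u => by
    rw [← Submodule.Quotient.mk_eq_zero, Submodule.Quotient.mk_smul]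
    exact Module.mem_annihilator.1 hm _
  refine ⟨Module.annihilator T (overSubmodule h.le ⧸ N), IsSimpleModule.annihilator_isMaximal, ?_⟩
  set M := Module.annihilator T (overSubmodule h.le ⧸ N)
  have hMU : ∀ i ∈ M • overSubmodule h.le, ∀ u ∈ U, i * u ∈ M • overSubmodule h.le := by
    intro i hi u hu
    induction hi using Submodule.smul_induction_on' with
    | smul m hm v hv =>
      rw [smul_mul_assoc]
      exact Submodule.smul_mem_smul hm (U.mul_mem hv hu)
    | add a _ b _ ha hb => rw [add_mul]; exact Submodule.add_mem _ ha hb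
  have hJU : M • overSubmodule h.le ≤ overSubmodule h.le := Submodule.smul_le_right
  have hJN : M • overSubmodule h.le ≤ N.map (overSubmodule h.le).subtype :=
    Submodule.smul_le.2 fun m hm u hu => ⟨m • ⟨u, hu⟩, hann m hm ⟨u, hu⟩, rfl⟩
  rcases h.le_or_eq_add (M • overSubmodule h.le) (fun j hj => hJU hj)
    (fun i hi j hj => ⟨0, T.zero_mem, i * j, hMU i hi j (hJU hj), by simp⟩) with h1 | h1
  · exact fun m hm u hu => h1 _ (Submodule.smul_mem_smul hm hu)
  · -- otherwise `U = T + MU ⊆ N`, contradicting `N ≠ U`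
    refine absurd (eq_top_iff.2 ?_) hN.1
    rintro ⟨u, hu⟩ -
    obtain ⟨t, ht, j, hj, rfl⟩ := h1 u hu
    obtain ⟨n, hn, rfl⟩ := hJN hj
    have ht' : (⟨t, h.le ht⟩ : overSubmodule h.le) ∈ N := hTN (show t ∈ T from ht)
    exact N.add_mem ht' hn

/-- In an infra-integral extension, coverings of subalgebras are coverings of `R`-submodules. -/
lemma toSubmodule_covBy (hinfra : IsInfraIntegral R S) (h : T ⋖ U) :
    Subalgebra.toSubmodule T ⋖ Subalgebra.toSubmodule U := by
  have hint : Algebra.IsIntegral R S := hinfra.1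
  obtain ⟨M, hM, hMU⟩ := exists_isMaximal_smul_mem h
  have hintT : Algebra.IsIntegral T S := Algebra.IsIntegral.tower_top R
  obtain ⟨Q, hQ, hQM⟩ := Ideal.exists_ideal_over_maximal_of_isIntegral (S := S) M (by
    intro t ht
    have : t = 0 := Subtype.ext ht
    rw [this]
    exact M.zero_mem)
  have hres := exists_sub_mem_of_residualExtIsIso Q (hinfra.2 Q hQ.isPrime)
  -- `Q ∩ T = M`, so multiplication by `Q ∩ T` maps `U` into `T`
  have hTQ : ∀ t ∈ T, t ∈ Q → ∀ u ∈ U, t * u ∈ T := fun t ht htQ u hu =>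
    hMU ⟨t, ht⟩ (by rw [← hQM]; exact htQ) u hu
  obtain ⟨y, hyU, hyT⟩ := SetLike.exists_of_lt h.lt
  obtain ⟨a, ha⟩ := hres y
  obtain ⟨x, hxU, hxT, hxQ⟩ : ∃ x ∈ U, x ∉ T ∧ x ∈ Q :=
    ⟨_, U.sub_mem hyU (U.algebraMap_mem a), fun hx => hyT (by
      simpa using T.add_mem hx (T.algebraMap_mem a)), ha⟩
  obtain ⟨z, hzU, hzT, hz⟩ : ∃ z ∈ U, z ∉ T ∧ ∃ b ∈ T, ∃ c ∈ T, z * z = b + c * z := by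
    have hJ : ∀ j ∈ (overSubmodule h.le).map (LinearMap.mulLeft T (x * x)),
        ∃ u ∈ U, j = x * x * u := by
      rintro _ ⟨u, hu, rfl⟩
      exact ⟨u, hu, rfl⟩
    have hJ' : ∀ u ∈ U, x * x * u ∈ (overSubmodule h.le).map (LinearMap.mulLeft T (x * x)) :=
      fun u hu => ⟨u, hu, rfl⟩
    rcases h.le_or_eq_add ((overSubmodule h.le).map (LinearMap.mulLeft T (x * x)))
      (fun j hj => by
        obtain ⟨u, hu, rfl⟩ := hJ j hj
        exact U.mul_mem (U.mul_mem hxU hxU) hu)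
      (fun i hi j hj => by
        obtain ⟨u, hu, rfl⟩ := hJ i hi
        obtain ⟨v, hv, rfl⟩ := hJ j hj
        refine ⟨0, T.zero_mem, _, hJ' (u * (x * x * v))
          (U.mul_mem hu (U.mul_mem (U.mul_mem hxU hxU) hv)), by ring⟩) with h1 | h1
    · refine ⟨x, hxU, hxT, x * x, ?_, 0, T.zero_mem, by ring⟩
      simpa using h1 _ (hJ' 1 U.one_mem)
    · obtain ⟨t, ht, j, hj, hx⟩ := h1 x hxU
      obtain ⟨u, hu, rfl⟩ := hJ j hj
      have htQ : t ∈ Q := by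
        have : t = x * (1 - x * u) := by linear_combination -hx
        rw [this]
        exact Q.mul_mem_right _ hxQ
      refine ⟨x * u, U.mul_mem hxU hu, fun he => hxT ?_, -(t * u),
        T.neg_mem (hTQ t ht htQ u hu), 1, T.one_mem, by linear_combination -u * hx⟩
      -- if `e = x u ∈ T`, then `e ∈ T ∩ Q`, so `x = t + e x ∈ T`
      have h2 := hTQ _ he (Q.mul_mem_right u hxQ) x hxU
      rw [hx]
      convert T.add_mem ht h2 using 1
      ring
  obtain ⟨b, hb, c, hc, hz⟩ := hz
  have hTz : ∀ u ∈ U, ∃ t ∈ T, ∃ r : R, u = t + r • z := by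
    rcases h.le_or_eq_add (Submodule.span T {z})
      (fun j hj => by
        obtain ⟨t, rfl⟩ := Submodule.mem_span_singleton.1 hj
        exact U.mul_mem (h.le t.2) hzU)
      (fun i hi j hj => by
        obtain ⟨s, rfl⟩ := Submodule.mem_span_singleton.1 hi
        obtain ⟨t, rfl⟩ := Submodule.mem_span_singleton.1 hj
        refine ⟨s * t * b, T.mul_mem (T.mul_mem s.2 t.2) hb, _,
          Submodule.mem_span_singleton.2 ⟨s * t * ⟨c, hc⟩, rfl⟩, ?_⟩
        simp only [Algebra.smul_def, Subalgebra.algebraMap_eq, map_mul]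
        change (s : S) * z * (t * z) = s * t * b + s * t * c * z
        linear_combination (s : S) * t * hz) with h1 | h1
    · exact absurd (h1 z (Submodule.mem_span_singleton_self z)) hzT
    · intro u hu
      obtain ⟨t, ht, j, hj, rfl⟩ := h1 u hu
      obtain ⟨s, rfl⟩ := Submodule.mem_span_singleton.1 hj
      obtain ⟨r, hr⟩ := hres s
      refine ⟨t + (s - algebraMap R S r) * z, T.add_mem ht
        (hTQ _ (T.sub_mem s.2 (T.algebraMap_mem r)) hr z hzU), r, ?_⟩
      rw [Algebra.smul_def r z]
      change t + (s : S) * z = _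
      ring
  have hP : (Q.comap (algebraMap R S)).IsMaximal :=
    Ideal.isMaximal_comap_of_isIntegral_of_isMaximal Q
  have hPz : ∀ p ∈ Q.comap (algebraMap R S), p • z ∈ T := fun p hp => by
    rw [Algebra.smul_def]
    exact hTQ _ (T.algebraMap_mem p) hp z hzU
  refine ⟨h.lt, fun N hTN hNU => hNU.not_ge ?_⟩
  obtain ⟨n, hnN, hnT⟩ := SetLike.exists_of_lt hTN
  obtain ⟨t, ht, r, rfl⟩ := hTz n (hNU.le hnN)
  have hrz : r • z ∈ N := by simpa using N.sub_mem hnN (hTN.le (show t ∈ T from ht))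
  have hr : r ∉ Q.comap (algebraMap R S) := fun hr => hnT (T.add_mem ht (hPz r hr))
  obtain ⟨s, p, hp, hsp⟩ := hP.exists_inv hr
  have hzN : z ∈ N := by
    have : z = s • r • z + p • z := by rw [smul_smul, ← add_smul, hsp, one_smul]
    rw [this]
    exact N.add_mem (N.smul_mem s hrz) (hTN.le (hPz p hp))
  intro u hu
  obtain ⟨t', ht', r', rfl⟩ := hTz u hu
  exact N.add_mem (hTN.le (show t' ∈ T from ht')) (N.smul_mem r' hzN)

end Cover

/-- Every infra-integral FCP ring extension is catenarian. -/
theorem stmt_10 {R S : Type*} [CommRing R] [CommRing S] [Algebra R S]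
    (hinj : Function.Injective (algebraMap R S)) (hFCP : IsFCPExt R S)
    (hinfra : IsInfraIntegral R S) :
    IsCatenarianExt R S := by
  rintro n m c d ⟨hc0, hcn, hc⟩ ⟨hd0, hdm, hd⟩
  let s : CompositionSeries (Submodule R S) :=
    ⟨n, fun i => Subalgebra.toSubmodule (c i), fun i => toSubmodule_covBy hinfra (hc i)⟩
  let t : CompositionSeries (Submodule R S) :=
    ⟨m, fun i => Subalgebra.toSubmodule (d i), fun i => toSubmodule_covBy hinfra (hd i)⟩
  have hhead : s.head = t.head := congrArg Subalgebra.toSubmodule (hc0.trans hd0.symm)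
  have hlast : s.last = t.last := congrArg Subalgebra.toSubmodule (hcn.trans hdm.symm)
  exact (CompositionSeries.jordan_holder s t hhead hlast).length_eq
end

section
/- Let R be a commutative ring and n ≥ 2 a positive integer such that the diagonal extension R ⊆ Rⁿ (r ↦ (r,…,r)) has FCP. Then R ⊆ Rⁿ is catenarian. -/
/-- If `N` is finitely generated and not contained in `N'`, then some closed point `Q` lies in the
support of `(N + N') / N'`, and the fibre there is nonzero by Nakayama. -/
lemma exists_maximal_not_le_sup_smul {B X : Type*} [CommRing B] [AddCommGroup X] [Module B X]
    (N N' : Submodule B X) (hN : N.FG) (h : ¬ N ≤ N') :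
    ∃ Q : Ideal B, Q.IsMaximal ∧ ¬ N ≤ N' ⊔ Q • N := by
  by_contra! hcon
  let J : Ideal B :=
    { carrier := {r | ∀ x ∈ N, r • x ∈ N'}
      add_mem' := fun ha hb x hx => by
        rw [add_smul]; exact N'.add_mem (ha x hx) (hb x hx)
      zero_mem' := fun x _ => by simp
      smul_mem' := fun c r hr x hx => by
        rw [smul_assoc]; exact N'.smul_mem c (hr x hx) }
  have hJ : J ≠ ⊤ := fun hJ => h fun x hx => by
    have h1 : (1 : B) ∈ J := hJ ▸ Submodule.mem_top
    simpa using h1 x hx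
  obtain ⟨Q, hQ, hJQ⟩ := Ideal.exists_le_maximal J hJ
  have hle : N.map N'.mkQ ≤ Q • N.map N'.mkQ := by
    rw [← Submodule.map_smul'']
    refine (Submodule.map_mono (hcon Q hQ)).trans ?_
    rw [Submodule.map_sup]
    simp
  obtain ⟨r, hr1, hr⟩ :=
    Submodule.exists_sub_one_mem_and_smul_eq_zero_of_fg_of_le_smul Q _ (hN.map _) hle
  have hrJ : r ∈ J := fun x hx => by
    have := hr _ (Submodule.mem_map_of_mem hx)
    rw [← map_smul] at this
    exact (Submodule.Quotient.mk_eq_zero N').1 this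
  refine hQ.ne_top ((Ideal.eq_top_iff_one Q).2 ?_)
  simpa using Q.sub_mem (hJQ hrJ) hr1

/-- Every element of `A` is a root of a monic polynomial over `R` that is a product of linear
factors. -/
def SplitIntegral (R A : Type*) [CommRing R] [CommRing A] [Algebra R A] : Prop :=
  ∀ x : A, ∃ s : Multiset R, (s.map fun r => x - algebraMap R A r).prod = 0

lemma SplitIntegral.exists_sub_mem {R A : Type*} [CommRing R] [CommRing A] [Algebra R A]
    (h : SplitIntegral R A) (P : Ideal A) (hP : P.IsPrime) (x : A) :
    ∃ r : R, x - algebraMap R A r ∈ P := by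
  obtain ⟨s, hs⟩ := h x
  have h0 : (s.map fun r => x - algebraMap R A r).prod ∈ P := hs ▸ P.zero_mem
  obtain ⟨y, hy, hyP⟩ := (Ideal.IsPrime.multiset_prod_mem_iff_exists_mem hP _).1 h0
  obtain ⟨r, -, rfl⟩ := Multiset.mem_map.1 hy
  exact ⟨r, hyP⟩

lemma ideal_le_or_of_isCoatom {R A : Type*} [CommRing R] [CommRing A] [Algebra R A]
    {T : Subalgebra R A} (hT : IsCoatom T) (I : Ideal A) :
    (∀ a ∈ I, a ∈ T) ∨ ∀ a : A, ∃ t ∈ T, a - t ∈ I := by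
  let W : Subalgebra R A := (T.map (Ideal.Quotient.mkₐ R I)).comap (Ideal.Quotient.mkₐ R I)
  have hW : ∀ a, a ∈ W ↔ ∃ t ∈ T, a - t ∈ I := fun a => by
    constructor
    · rintro ⟨t, ht, hta⟩
      exact ⟨t, ht, Ideal.Quotient.eq.1 hta.symm⟩
    · rintro ⟨t, ht, hta⟩
      exact ⟨t, ht, (Ideal.Quotient.eq.2 hta).symm⟩
  have hTW : T ≤ W := fun t ht => (hW t).2 ⟨t, ht, by simp⟩
  rcases hT.le_iff.1 hTW with h | h
  · right
    intro a
    exact (hW a).1 (h ▸ Algebra.mem_top)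
  · left
    intro a ha
    rw [← h]
    exact (hW a).2 ⟨0, T.zero_mem, by simpa using ha⟩

/-- A maximal proper subalgebra is also maximal as a submodule. -/
lemma eq_or_eq_top_of_isCoatom {R A : Type*} [CommRing R] [CommRing A] [Algebra R A]
    [IsNoetherian R A] (hA : SplitIntegral R A) {T : Subalgebra R A} (hT : IsCoatom T)
    (V : Submodule R A) (hTV : Subalgebra.toSubmodule T ≤ V) :
    V = Subalgebra.toSubmodule T ∨ V = ⊤ := by
  have hTA : ∃ a, a ∉ T := by
    by_contra! h
    exact hT.1 (eq_top_iff.2 fun a _ => h a)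
  have : IsNoetherian T A := isNoetherian_of_tower R inferInstance
  have : IsNoetherian A A := isNoetherian_of_tower R inferInstance
  -- A maximal ideal `M` of `T` whose extension to `A` is contained in `T`.
  obtain ⟨M, hM, hMT⟩ := exists_maximal_not_le_sup_smul (⊤ : Submodule T A)
    (LinearMap.range (Algebra.linearMap T A)) (IsNoetherian.noetherian _) (by
      obtain ⟨a, ha⟩ := hTA
      intro h
      obtain ⟨t, rfl⟩ := h (Submodule.mem_top (x := a))
      exact ha t.2)
  set I : Ideal A := M.map (algebraMap T A) with hI
  have hIT : ∀ a ∈ I, a ∈ T := by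
    refine (ideal_le_or_of_isCoatom hT I).resolve_right fun h => hMT fun a _ => ?_
    obtain ⟨t, ht, hta⟩ := h a
    rw [← add_sub_cancel t a]
    refine Submodule.add_mem_sup ⟨⟨t, ht⟩, rfl⟩ ?_
    rw [Ideal.smul_top_eq_map]
    exact hta
  have hItop : I ≠ ⊤ := by
    intro h
    obtain ⟨a, ha⟩ := hTA
    exact ha (hIT a (h ▸ Submodule.mem_top))
  obtain ⟨P, hP, hIP⟩ := Ideal.exists_le_maximal I hItop
  -- `P` contracts to `M`, so `P ∩ T ⊆ I`.
  have hPT : ∀ t ∈ T, t ∈ P → t ∈ I := by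
    intro t ht htP
    have hMP : M = P.comap (algebraMap T A) :=
      hM.eq_of_le (Ideal.comap_ne_top _ hP.ne_top) (Ideal.map_le_iff_le_comap.1 hIP)
    have : (⟨t, ht⟩ : T) ∈ M := by rw [hMP]; exact htP
    exact Ideal.mem_map_of_mem (algebraMap T A) this
  have hPI : ¬ P ≤ I := by
    intro h
    obtain ⟨a, ha⟩ := hTA
    obtain ⟨r, hr⟩ := hA.exists_sub_mem P hP.isPrime a
    apply ha
    rw [← sub_add_cancel a (algebraMap R A r)]
    exact T.add_mem (hIT _ (h hr)) (T.algebraMap_mem r)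
  obtain ⟨Q, hQ, hQP⟩ := exists_maximal_not_le_sup_smul P I (IsNoetherian.noetherian _) hPI
  have hQPT : ∀ a ∈ Q • P, a ∈ T := by
    refine (ideal_le_or_of_isCoatom hT _).resolve_right fun h => hQP fun p hp => ?_
    obtain ⟨t, ht, htp⟩ := h p
    rw [← add_sub_cancel t p]
    refine Submodule.add_mem_sup (hPT t ht ?_) htp
    have h1 : p - t ∈ P := Submodule.smul_le_right htp
    simpa using P.sub_mem hp h1
  have hRV : ∀ r, algebraMap R A r ∈ V := fun r => hTV (T.algebraMap_mem r)
  -- Modulo `R`, two elements of `V` are `p ∈ P` and `s + q` with `q ∈ Q`, and `p * q ∈ T`.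
  have hmul : ∀ v w, v ∈ V → w ∈ V → v * w ∈ V := by
    intro v w hv hw
    obtain ⟨r, hr⟩ := hA.exists_sub_mem P hP.isPrime v
    obtain ⟨s, hs⟩ := hA.exists_sub_mem Q hQ.isPrime w
    have hpq : (w - algebraMap R A s) * (v - algebraMap R A r) ∈ V :=
      hTV (hQPT _ (Submodule.smul_mem_smul hs hr))
    have key : v * w = (w - algebraMap R A s) * (v - algebraMap R A r)
        + r • w + s • (v - algebraMap R A r) := by
      simp only [Algebra.smul_def]; ring
    rw [key]
    exact V.add_mem (V.add_mem hpq (V.smul_mem _ hw))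
      (V.smul_mem _ (V.sub_mem hv (hRV r)))
  let W : Subalgebra R A := V.toSubalgebra (by simpa using hRV 1) hmul
  have hWV : Subalgebra.toSubmodule W = V := Submodule.toSubalgebra_toSubmodule _ _ _
  have hTW : T ≤ W := fun t ht => hTV ht
  rcases hT.le_iff.1 hTW with h | h
  · right
    rw [← hWV, h, Algebra.top_toSubmodule]
  · left
    rw [← hWV, h]

lemma toSubmodule_covBy_s11 {R S : Type*} [CommRing R] [CommRing S] [Algebra R S]
    [IsNoetherian R S] (hS : SplitIntegral R S) {T U : Subalgebra R S} (h : T ⋖ U) :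
    Subalgebra.toSubmodule T ⋖ Subalgebra.toSubmodule U := by
  have hU : SplitIntegral R U := fun x => by
    obtain ⟨s, hs⟩ := hS x
    refine ⟨s, Subtype.val_injective ?_⟩
    rw [← Subalgebra.coe_val, map_multiset_prod, Multiset.map_map]
    simpa using hs
  have : IsNoetherian R U := inferInstanceAs (IsNoetherian R (Subalgebra.toSubmodule U))
  have hco : IsCoatom (T.comap U.val) := by
    refine ⟨fun htop => h.lt.not_ge fun x hx => ?_, fun W hW => ?_⟩
    · have : (⟨x, hx⟩ : U) ∈ T.comap U.val := htop ▸ Algebra.mem_top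
      exact this
    · have hmap : T < W.map U.val := by
        refine lt_of_le_not_ge (fun t ht => ?_) fun hle => hW.not_ge fun w hw => ?_
        · exact ⟨⟨t, h.le ht⟩, hW.le (show (⟨t, h.le ht⟩ : U) ∈ T.comap U.val from ht), rfl⟩
        · exact hle ⟨w, hw, rfl⟩
      have hle : W.map U.val ≤ U := by
        rintro _ ⟨w, -, rfl⟩
        exact w.2
      have heq : W.map U.val = U := hle.eq_of_not_lt (h.2 hmap)
      refine eq_top_iff.2 fun x _ => ?_
      obtain ⟨w, hw, hwx⟩ : (x : S) ∈ W.map U.val := heq.ge x.2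
      rwa [← Subtype.val_injective hwx]
  refine ⟨Subalgebra.toSubmodule.lt_iff_lt.2 h.lt, fun V hTV hVU => ?_⟩
  rcases eq_or_eq_top_of_isCoatom hU hco (V.comap U.val.toLinearMap)
    (fun x hx => hTV.le hx) with hV | hV
  · refine hTV.not_ge fun v hv => ?_
    have : (⟨v, hVU.le hv⟩ : U) ∈ V.comap U.val.toLinearMap := hv
    rw [hV] at this
    exact this
  · refine hVU.not_ge fun u hu => ?_
    have : (⟨u, hu⟩ : U) ∈ V.comap U.val.toLinearMap := hV ▸ Submodule.mem_top
    exact this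

/-- The subalgebra of tuples that are constant modulo the ideal `I`. -/
def diffSubalgebra {R : Type*} [CommRing R] (n : ℕ) (I : Ideal R) :
    Subalgebra R (Fin n → R) where
  carrier := {f | ∀ i j, f i - f j ∈ I}
  mul_mem' {f g} hf hg i j := by
    have : (f * g) i - (f * g) j = f i * (g i - g j) + g j * (f i - f j) := by
      simp only [Pi.mul_apply]; ring
    rw [this]
    exact I.add_mem (I.mul_mem_left _ (hg i j)) (I.mul_mem_left _ (hf i j))
  add_mem' {f g} hf hg i j := by
    have : (f + g) i - (f + g) j = (f i - f j) + (g i - g j) := by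
      simp only [Pi.add_apply]; ring
    rw [this]
    exact I.add_mem (hf i j) (hg i j)
  algebraMap_mem' r i j := by simp

lemma diffSubalgebra_le_iff {R : Type*} [CommRing R] {n : ℕ} (hn : 2 ≤ n) {I J : Ideal R} :
    diffSubalgebra n I ≤ diffSubalgebra n J ↔ I ≤ J := by
  refine ⟨fun h a ha => ?_, fun h f hf i j => h (hf i j)⟩
  have hmem : (Pi.single ⟨0, by omega⟩ a : Fin n → R) ∈ diffSubalgebra n I := by
    intro i j
    have hI : ∀ k, (Pi.single ⟨0, by omega⟩ a : Fin n → R) k ∈ I := fun k => by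
      rw [Pi.single_apply]
      split_ifs
      exacts [ha, I.zero_mem]
    exact I.sub_mem (hI i) (hI j)
  have := h hmem ⟨0, by omega⟩ ⟨1, by omega⟩
  simpa [Pi.single_apply] using this

lemma isNoetherianRing_of_isFCPExt {R : Type*} [CommRing R] {n : ℕ} (hn : 2 ≤ n)
    (hFCP : IsFCPExt R (Fin n → R)) : IsNoetherianRing R := by
  rw [isNoetherianRing_iff, isNoetherian_iff']
  by_contra hcon
  rw [WellFoundedGT, isWellFounded_iff,
    RelEmbedding.wellFounded_iff_isEmpty, not_isEmpty_iff] at hcon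
  obtain ⟨f⟩ := hcon
  have hinj : Function.Injective fun k => diffSubalgebra n (f k) := fun a b hab =>
    f.injective (le_antisymm ((diffSubalgebra_le_iff hn).1 (le_of_eq hab))
      ((diffSubalgebra_le_iff hn).1 (le_of_eq hab.symm)))
  have hmono : Monotone f := monotone_nat_of_le_succ fun k =>
    le_of_lt (f.map_rel_iff.2 (Nat.lt_succ_self k))
  refine Set.infinite_range_of_injective hinj (hFCP _ ?_)
  exact Monotone.isChain_range fun a b hab => (diffSubalgebra_le_iff hn).2 (hmono hab)

/-- If `n ≥ 2` and the diagonal extension `R ⊆ Rⁿ` has FCP,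
then it is catenarian. -/
theorem stmt_11 (R : Type*) [CommRing R] (n : ℕ) (hn : 2 ≤ n)
    (hFCP : IsFCPExt R (Fin n → R)) :
    IsCatenarianExt R (Fin n → R) := by
  have := isNoetherianRing_of_isFCPExt hn hFCP
  have hS : SplitIntegral R (Fin n → R) := fun x => by
    refine ⟨Finset.univ.val.map x, ?_⟩
    rw [Multiset.map_map]
    change (∏ i : Fin n, (x - algebraMap R (Fin n → R) (x i))) = 0
    ext j
    rw [Finset.prod_apply]
    exact Finset.prod_eq_zero (Finset.mem_univ j) (by simp)
  intro p q c d ⟨hc0, hc1, hc⟩ ⟨hd0, hd1, hd⟩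
  let s : CompositionSeries (Submodule R (Fin n → R)) :=
    ⟨p, fun i => Subalgebra.toSubmodule (c i), fun i => toSubmodule_covBy_s11 hS (hc i)⟩
  let t : CompositionSeries (Submodule R (Fin n → R)) :=
    ⟨q, fun i => Subalgebra.toSubmodule (d i), fun i => toSubmodule_covBy_s11 hS (hd i)⟩
  have hhead : s.head = t.head := congrArg Subalgebra.toSubmodule (hc0.trans hd0.symm)
  have hlast : s.last = t.last := congrArg Subalgebra.toSubmodule (hc1.trans hd1.symm)
  exact (CompositionSeries.jordan_holder s t hhead hlast).length_eq
end
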